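/- arXiv:1506.07756 — 4 statements merged into one kernel-verified Lean document; each statement's English description precedes it below -/
import Mathlib

section
/- Let V_A and V_B be finite-dimensional complex inner-product spaces, let v ∈ V_A ⊗ V_B, and let M_A be a linear operator on V_A such that (M_A ⊗ I_B) v = λ v for some λ ∈ ℂ. Then (M_A ⊗ I_B) v' = λ v' for every v' ∈ Σ_A(v) ⊗ V_B. In particular, if (M_A ⊗ I_B) v = 0 then Σ_A(v) ⊗ V_B ⊆ ker(M_A ⊗ I_B), and if (M_A ⊗ I_B) v = v then every element of Σ_A(v) ⊗ V_B is fixed by M_A ⊗ I_B. -/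
namespace QDS

open Matrix
open scoped ComplexOrder

/-! ### Basic single-system notions -/

section Single

variable {ι : Type*} [Fintype ι] [DecidableEq ι]

open Classical in
/-- The (unique) positive-semidefinite square root of a positive-semidefinite matrix
(junk value `0` if no positive-semidefinite square root exists). -/
noncomputable def msqrt (A : Matrix ι ι ℂ) : Matrix ι ι ℂ :=
  if h : ∃ B : Matrix ι ι ℂ, B.PosSemidef ∧ B * B = A then h.choose else 0

open Classical in
/-- The Moore–Penrose pseudoinverse of a matrix, defined via its characterizing
properties (it always exists and is unique for complex matrices). -/
noncomputable def mpinv (A : Matrix ι ι ℂ) : Matrix ι ι ℂ :=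
  if h : ∃ B : Matrix ι ι ℂ,
      A * B * A = A ∧ B * A * B = B ∧ (A * B)ᴴ = A * B ∧ (B * A)ᴴ = B * A
  then h.choose else 0

/-- A density operator: positive semidefinite with unit trace. -/
def IsDensity (ρ : Matrix ι ι ℂ) : Prop := ρ.PosSemidef ∧ ρ.trace = 1

/-- A CPTP map in Kraus (operator-sum) form. -/
def IsCPTP (T : Matrix ι ι ℂ →ₗ[ℂ] Matrix ι ι ℂ) : Prop :=
  ∃ (m : ℕ) (M : Fin m → Matrix ι ι ℂ),
    (∀ X, T X = ∑ k, M k * X * (M k)ᴴ) ∧ (∑ k, (M k)ᴴ * M k) = 1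

/-- The Lindblad (QDS) generator with Hamiltonian `Hm` and noise operators `Lk`:
`L(X) = -i[Hm, X] + Σₖ (Lₖ X Lₖ† - ½{Lₖ†Lₖ, X})`. -/
noncomputable def lindbladMap (Hm : Matrix ι ι ℂ) {m : ℕ} (Lk : Fin m → Matrix ι ι ℂ) :
    Matrix ι ι ℂ →ₗ[ℂ] Matrix ι ι ℂ :=
  (-Complex.I) • (LinearMap.mulLeft ℂ Hm - LinearMap.mulRight ℂ Hm) +
    ∑ k, ((LinearMap.mulRight ℂ (Lk k)ᴴ).comp (LinearMap.mulLeft ℂ (Lk k)) -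
      ((1 : ℂ)/2) • (LinearMap.mulLeft ℂ ((Lk k)ᴴ * Lk k) +
        LinearMap.mulRight ℂ ((Lk k)ᴴ * Lk k)))

/-- `L` is a QDS (Lindblad) generator. -/
def IsLindblad (L : Matrix ι ι ℂ →ₗ[ℂ] Matrix ι ι ℂ) : Prop :=
  ∃ Hm : Matrix ι ι ℂ, Hm.IsHermitian ∧
    ∃ (m : ℕ) (Lk : Fin m → Matrix ι ι ℂ), L = lindbladMap Hm Lk

/-- `Ld` is the Hilbert–Schmidt adjoint of `L` (w.r.t. `⟨X,Y⟩ = Tr(X†Y)`). -/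
def IsHSAdjoint (L Ld : Matrix ι ι ℂ →ₗ[ℂ] Matrix ι ι ℂ) : Prop :=
  ∀ X Y : Matrix ι ι ℂ, ((Ld X)ᴴ * Y).trace = (Xᴴ * L Y).trace

/-- The fixed-point set of a (super)operator. -/
def fixSet (T : Matrix ι ι ℂ →ₗ[ℂ] Matrix ι ι ℂ) : Set (Matrix ι ι ℂ) := {X | T X = X}

/-- The support of an operator: the orthogonal complement of its kernel,
equivalently the range of its adjoint. -/
noncomputable def msupp (A : Matrix ι ι ℂ) : Submodule ℂ (ι → ℂ) := LinearMap.range (Aᴴ).mulVecLin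

/-- The support of a set of operators: the span of the union of their supports. -/
noncomputable def suppSet (W : Set (Matrix ι ι ℂ)) : Submodule ℂ (ι → ℂ) := ⨆ O ∈ W, msupp O

/-- The minimal modular-invariant distorted algebra generated by `W` relative to `ρ`:
the smallest subspace containing `W` that is closed under the adjoint, under the
`ρ`-modified product `(X,Y) ↦ X ρ⁻ Y`, and under the modular map `X ↦ ρ^{1/2} X ρ⁻^{1/2}`. -/
noncomputable def Fdist (ρ : Matrix ι ι ℂ) (W : Set (Matrix ι ι ℂ)) :
    Submodule ℂ (Matrix ι ι ℂ) :=
  sInf {S : Submodule ℂ (Matrix ι ι ℂ) | W ⊆ S ∧ (∀ X ∈ S, Xᴴ ∈ S) ∧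
    (∀ X ∈ S, ∀ Y ∈ S, X * mpinv ρ * Y ∈ S) ∧
    (∀ X ∈ S, msqrt ρ * X * mpinv (msqrt ρ) ∈ S)}

/-- `ρ` is globally asymptotically stable for the generator `L`: it is invariant and every
solution of `ẋ = L(x)` starting at a density operator converges to `ρ` as `t → ∞`. -/
def IsGAS (L : Matrix ι ι ℂ →ₗ[ℂ] Matrix ι ι ℂ) (ρ : Matrix ι ι ℂ) : Prop :=
  L ρ = 0 ∧
  ∀ σ : Matrix ι ι ℂ, IsDensity σ →
    ∀ x : ℝ → Matrix ι ι ℂ, x 0 = σ →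
      (∀ t : ℝ, ∀ i j, HasDerivAt (fun s : ℝ => x s i j) (L (x t) i j) t) →
      ∀ i j, Filter.Tendsto (fun t : ℝ => x t i j) Filter.atTop (nhds (ρ i j))

end Single

/-! ### Bipartite notions -/

section Bipartite

variable {α β : Type*} [Fintype α] [Fintype β] [DecidableEq α] [DecidableEq β]

/-- Partial trace over the second factor. -/
noncomputable def ptraceB (ρ : Matrix (α × β) (α × β) ℂ) : Matrix α α ℂ :=
  Matrix.of fun i j => ∑ k : β, ρ (i, k) (j, k)

/-- The operator Schmidt span of `ρ` on the first factor:
`{Tr_B[(I ⊗ B) ρ] : B ∈ B(H_B)}`. -/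
noncomputable def opSchmidtA (ρ : Matrix (α × β) (α × β) ℂ) : Set (Matrix α α ℂ) :=
  {A | ∃ B : Matrix β β ℂ,
    A = ptraceB ((Matrix.kroneckerMap (· * ·) (1 : Matrix α α ℂ) B) * ρ)}

/-- The (vector) Schmidt span of `v ∈ V_A ⊗ V_B` relative to `V_A`: the image of `v`
under partial inner products with vectors of `V_B`. -/
def vSchmidtA (v : α × β → ℂ) : Set (α → ℂ) :=
  {w | ∃ b : β → ℂ, w = fun a => ∑ j, (starRingEnd ℂ) (b j) * v (a, j)}

/-- `Σ_A(v) ⊗ V_B` as a subspace of `V_A ⊗ V_B`. -/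
noncomputable def extVSchmidtA (v : α × β → ℂ) : Submodule ℂ (α × β → ℂ) :=
  Submodule.span ℂ {v' | ∃ w ∈ vSchmidtA v, ∃ b : β → ℂ, v' = fun p => w p.1 * b p.2}

end Bipartite

/-! ### Multipartite notions -/

section Multipartite

variable {n : ℕ} {d : Fin n → Type*} [∀ a, Fintype (d a)] [∀ a, DecidableEq (d a)]

/-- Index type of the neighborhood factor `H_N`. -/
abbrev nbhdIdx (d : Fin n → Type*) (N : Finset (Fin n)) : Type _ :=
  ∀ a : {x : Fin n // x ∈ N}, d a

/-- Index type of the complementary factor `H_N̄`. -/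
abbrev nbhdCoIdx (d : Fin n → Type*) (N : Finset (Fin n)) : Type _ :=
  ∀ a : {x : Fin n // ¬ x ∈ N}, d a

/-- The factorization `H ≃ H_N ⊗ H_N̄` at the level of index types. -/
def splitEquiv (d : Fin n → Type*) (N : Finset (Fin n)) :
    (∀ a, d a) ≃ nbhdIdx d N × nbhdCoIdx d N :=
  Equiv.piEquivPiSubtypeProd (fun x => x ∈ N) d

variable (d)

/-- The operator `A ⊗ B` on `H = H_N ⊗ H_N̄`, viewed as an operator on `H`. -/
noncomputable def splitLift (N : Finset (Fin n))
    (A : Matrix (nbhdIdx d N) (nbhdIdx d N) ℂ)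
    (B : Matrix (nbhdCoIdx d N) (nbhdCoIdx d N) ℂ) :
    Matrix (∀ a, d a) (∀ a, d a) ℂ :=
  (Matrix.kroneckerMap (· * ·) A B).submatrix (splitEquiv d N) (splitEquiv d N)

/-- The neighborhood operator `A ⊗ I_N̄` on `H`. -/
noncomputable def nbhdLift (N : Finset (Fin n))
    (A : Matrix (nbhdIdx d N) (nbhdIdx d N) ℂ) : Matrix (∀ a, d a) (∀ a, d a) ℂ :=
  splitLift d N A 1

/-- The operator `I_N ⊗ B` on `H`. -/
noncomputable def coLift (N : Finset (Fin n))
    (B : Matrix (nbhdCoIdx d N) (nbhdCoIdx d N) ℂ) : Matrix (∀ a, d a) (∀ a, d a) ℂ :=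
  splitLift d N 1 B

/-- The reduced state `ρ_N = Tr_N̄(ρ)` on the neighborhood `N`. -/
noncomputable def nbhdPtrace (N : Finset (Fin n)) (ρ : Matrix (∀ a, d a) (∀ a, d a) ℂ) :
    Matrix (nbhdIdx d N) (nbhdIdx d N) ℂ :=
  Matrix.of fun i j => ∑ k : nbhdCoIdx d N,
    ρ ((splitEquiv d N).symm (i, k)) ((splitEquiv d N).symm (j, k))

/-- The operator Schmidt span of `ρ` on the neighborhood `N`:
`Σ_N(ρ) = {Tr_N̄[(I_N ⊗ B) ρ] : B}`. -/
noncomputable def nbhdSchmidt (N : Finset (Fin n)) (ρ : Matrix (∀ a, d a) (∀ a, d a) ℂ) :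
    Set (Matrix (nbhdIdx d N) (nbhdIdx d N) ℂ) :=
  {A | ∃ B : Matrix (nbhdCoIdx d N) (nbhdCoIdx d N) ℂ,
    A = nbhdPtrace d N (coLift d N B * ρ)}

/-- The extended minimal modular-invariant distorted algebra
`F_{ρ_N}(Σ_N(ρ)) ⊗ B(H_N̄)` as a subspace of `B(H)`. -/
noncomputable def extF (N : Finset (Fin n)) (ρ : Matrix (∀ a, d a) (∀ a, d a) ℂ) :
    Submodule ℂ (Matrix (∀ a, d a) (∀ a, d a) ℂ) :=
  Submodule.span ℂ {X | ∃ A ∈ Fdist (nbhdPtrace d N ρ) (nbhdSchmidt d N ρ),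
    ∃ B : Matrix (nbhdCoIdx d N) (nbhdCoIdx d N) ℂ, X = splitLift d N A B}

/-- A neighborhood QDS generator for `N`: a Lindblad generator whose Hamiltonian and
noise operators all act as `X_N ⊗ I_N̄`. -/
def IsNbhdGen (N : Finset (Fin n))
    (L : Matrix (∀ a, d a) (∀ a, d a) ℂ →ₗ[ℂ] Matrix (∀ a, d a) (∀ a, d a) ℂ) : Prop :=
  ∃ HN : Matrix (nbhdIdx d N) (nbhdIdx d N) ℂ, HN.IsHermitian ∧
    ∃ (m : ℕ) (Lk : Fin m → Matrix (nbhdIdx d N) (nbhdIdx d N) ℂ),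
      L = lindbladMap (nbhdLift d N HN) fun k => nbhdLift d N (Lk k)

/-- A purely dissipative neighborhood generator for `N` (zero Hamiltonian in some
Lindblad representation). -/
def IsDissipNbhdGen (N : Finset (Fin n))
    (L : Matrix (∀ a, d a) (∀ a, d a) ℂ →ₗ[ℂ] Matrix (∀ a, d a) (∀ a, d a) ℂ) : Prop :=
  ∃ (m : ℕ) (Lk : Fin m → Matrix (nbhdIdx d N) (nbhdIdx d N) ℂ),
    L = lindbladMap 0 fun k => nbhdLift d N (Lk k)

/-- The family of neighborhood generators `Lj` is frustration free: every invariant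
state of the sum is invariant for each component. -/
def IsFFFamily {M : ℕ}
    (Lj : Fin M → (Matrix (∀ a, d a) (∀ a, d a) ℂ →ₗ[ℂ] Matrix (∀ a, d a) (∀ a, d a) ℂ)) :
    Prop :=
  ∀ ρ : Matrix (∀ a, d a) (∀ a, d a) ℂ, IsDensity ρ → (∑ j, Lj j) ρ = 0 → ∀ j, Lj j ρ = 0

/-- `ρ` is frustration-free quasi-locally stabilizable relative to the neighborhood
structure `Nb`. -/
def IsFFQLS {M : ℕ} (Nb : Fin M → Finset (Fin n))
    (ρ : Matrix (∀ a, d a) (∀ a, d a) ℂ) : Prop :=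
  ∃ Lj : Fin M → (Matrix (∀ a, d a) (∀ a, d a) ℂ →ₗ[ℂ] Matrix (∀ a, d a) (∀ a, d a) ℂ),
    (∀ j, IsNbhdGen d (Nb j) (Lj j)) ∧ IsFFFamily d Lj ∧ IsGAS (∑ j, Lj j) ρ

/-- A pure state `|ψ⟩⟨ψ|` is dissipatively quasi-locally stabilizable relative to `Nb`:
it is GAS for a QL generator whose components have zero Hamiltonian and neighborhood
noise operators annihilating `ψ`. -/
def IsDQLS {M : ℕ} (Nb : Fin M → Finset (Fin n)) (ψ : (∀ a, d a) → ℂ) : Prop :=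
  ∃ Lj : Fin M → (Matrix (∀ a, d a) (∀ a, d a) ℂ →ₗ[ℂ] Matrix (∀ a, d a) (∀ a, d a) ℂ),
    (∀ j, ∃ (m : ℕ) (Dk : Fin m → Matrix (nbhdIdx d (Nb j)) (nbhdIdx d (Nb j)) ℂ),
      Lj j = lindbladMap 0 (fun k => nbhdLift d (Nb j) (Dk k)) ∧
      ∀ k, (nbhdLift d (Nb j) (Dk k)).mulVec ψ = 0) ∧
    IsGAS (∑ j, Lj j) (Matrix.vecMulVec ψ (star ψ))

/-- The (vector) Schmidt span of `ψ` relative to the neighborhood factor `H_N`. -/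
def vecSchmidt (N : Finset (Fin n)) (ψ : (∀ a, d a) → ℂ) : Set (nbhdIdx d N → ℂ) :=
  {w | ∃ b : nbhdCoIdx d N → ℂ,
    w = fun i => ∑ k, (starRingEnd ℂ) (b k) * ψ ((splitEquiv d N).symm (i, k))}

/-- `Σ_N(ψ) ⊗ H_N̄` as a subspace of `H`. -/
noncomputable def extVecSchmidt (N : Finset (Fin n)) (ψ : (∀ a, d a) → ℂ) :
    Submodule ℂ ((∀ a, d a) → ℂ) :=
  Submodule.span ℂ {v | ∃ w ∈ vecSchmidt d N ψ, ∃ b : nbhdCoIdx d N → ℂ,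
    v = fun x => w ((splitEquiv d N) x).1 * b ((splitEquiv d N) x).2}

end Multipartite

/-! ### Statement 3 -/

/-- Entrywise action of `MA ⊗ I`. -/
theorem kron_one_mulVec_apply
    {α β : Type*} [Fintype α] [Fintype β] [DecidableEq α] [DecidableEq β]
    (MA : Matrix α α ℂ) (u : α × β → ℂ) (a : α) (j : β) :
    (Matrix.kroneckerMap (· * ·) MA (1 : Matrix β β ℂ)).mulVec u (a, j)
      = ∑ a', MA a a' * u (a', j) := by
  simp [Matrix.mulVec, dotProduct, Fintype.sum_prod_type, Matrix.one_apply]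

theorem stmt3_aux
    {α β : Type*} [Fintype α] [Fintype β] [DecidableEq α] [DecidableEq β]
    (v : α × β → ℂ) (MA : Matrix α α ℂ) (lam : ℂ)
    (h : (Matrix.kroneckerMap (· * ·) MA (1 : Matrix β β ℂ)).mulVec v = lam • v) :
    ∀ v' ∈ extVSchmidtA v,
        (Matrix.kroneckerMap (· * ·) MA (1 : Matrix β β ℂ)).mulVec v' = lam • v' := by
  have hv : ∀ a j, ∑ a', MA a a' * v (a', j) = lam * v (a, j) := by
    intro a j
    rw [← kron_one_mulVec_apply, h]
    simp
  intro v' hv'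
  unfold extVSchmidtA at hv'
  induction hv' using Submodule.span_induction with
  | mem x hx =>
    obtain ⟨w, ⟨c, rfl⟩, b, rfl⟩ := hx
    funext p
    obtain ⟨a, j⟩ := p
    rw [kron_one_mulVec_apply]
    simp only [Pi.smul_apply, smul_eq_mul]
    calc ∑ a', MA a a' * ((∑ k, (starRingEnd ℂ) (c k) * v (a', k)) * b j)
        = (∑ k, (starRingEnd ℂ) (c k) * ∑ a', MA a a' * v (a', k)) * b j := by
          simp only [Finset.mul_sum, Finset.sum_mul]
          rw [Finset.sum_comm]
          refine Finset.sum_congr rfl fun k _ => Finset.sum_congr rfl fun a' _ => ?_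
          ring
      _ = lam * ((∑ k, (starRingEnd ℂ) (c k) * v (a, k)) * b j) := by
          simp only [hv, Finset.mul_sum, Finset.sum_mul]
          refine Finset.sum_congr rfl fun k _ => ?_
          ring
  | zero => simp
  | add x y _ _ hx hy => rw [Matrix.mulVec_add, hx, hy, smul_add]
  | smul t x _ hx => rw [Matrix.mulVec_smul, hx, smul_comm]

theorem stmt3
    {α β : Type*} [Fintype α] [Fintype β] [DecidableEq α] [DecidableEq β]
    (v : α × β → ℂ) (MA : Matrix α α ℂ) (lam : ℂ)
    (h : (Matrix.kroneckerMap (· * ·) MA (1 : Matrix β β ℂ)).mulVec v = lam • v) :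
    (∀ v' ∈ extVSchmidtA v,
        (Matrix.kroneckerMap (· * ·) MA (1 : Matrix β β ℂ)).mulVec v' = lam • v') ∧
      ((Matrix.kroneckerMap (· * ·) MA (1 : Matrix β β ℂ)).mulVec v = 0 →
        ∀ v' ∈ extVSchmidtA v,
          (Matrix.kroneckerMap (· * ·) MA (1 : Matrix β β ℂ)).mulVec v' = 0) ∧
      ((Matrix.kroneckerMap (· * ·) MA (1 : Matrix β β ℂ)).mulVec v = v →
        ∀ v' ∈ extVSchmidtA v,
          (Matrix.kroneckerMap (· * ·) MA (1 : Matrix β β ℂ)).mulVec v' = v') := by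
  refine ⟨stmt3_aux v MA lam h, fun h0 v' hv' => ?_, fun h1 v' hv' => ?_⟩
  · simpa using stmt3_aux v MA 0 (by simpa using h0) v' hv'
  · simpa using stmt3_aux v MA 1 (by simpa using h1) v' hv'

end QDS
end

section
/- Let ρ be a density operator on a finite-dimensional tensor product H_A ⊗ H_B. Then supp(Tr_B ρ) = supp(Σ_A(ρ)), where Σ_A(ρ) = {Tr_B[(I_A ⊗ B)ρ] : B ∈ B(H_B)} is the operator Schmidt span of ρ on A: the support of the reduced state equals the span of the union of the supports of the elements of the operator Schmidt span. -/
namespace QDS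

open Matrix
open scoped ComplexOrder

/-! ### Statement 4 -/

open scoped MatrixOrder Matrix.Norms.L2Operator in
theorem posSemidef_factor_aux {m : Type*} [Fintype m] [DecidableEq m]
    {A : Matrix m m ℂ} (hA : A.PosSemidef) : ∃ D : Matrix m m ℂ, A = star D * D :=
  CStarAlgebra.nonneg_iff_eq_star_mul_self.mp hA.nonneg

theorem range_mul_conjTranspose_aux {m n : Type*} [Fintype m] [Fintype n]
    (M : Matrix m n ℂ) :
    LinearMap.range (M * Mᴴ).mulVecLin = LinearMap.range M.mulVecLin := by
  apply Submodule.eq_of_le_of_finrank_eq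
  · rw [Matrix.mulVecLin_mul]
    exact LinearMap.range_comp_le_range _ _
  · exact Matrix.rank_self_mul_conjTranspose M

theorem stmt4
    {α β : Type*} [Fintype α] [Fintype β] [DecidableEq α] [DecidableEq β]
    (ρ : Matrix (α × β) (α × β) ℂ) (hρ : IsDensity ρ) :
    msupp (ptraceB ρ) = suppSet (opSchmidtA ρ) := by
  obtain ⟨C, hC⟩ : ∃ C : Matrix (α × β) (α × β) ℂ, ρ = C * Cᴴ := by
    obtain ⟨D, hD⟩ := posSemidef_factor_aux hρ.1
    exact ⟨Dᴴ, by simpa [Matrix.star_eq_conjTranspose] using hD⟩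
  let M : Matrix α (β × (α × β)) ℂ := Matrix.of fun i p => C (i, p.1) p.2
  have hM : ptraceB ρ = M * Mᴴ := by
    ext i j
    simp [ptraceB, hC, Matrix.mul_apply, M, Fintype.sum_prod_type]
  have h1 : msupp (ptraceB ρ) = LinearMap.range M.mulVecLin := by
    rw [msupp, hM, Matrix.conjTranspose_mul, Matrix.conjTranspose_conjTranspose,
      range_mul_conjTranspose_aux]
  apply le_antisymm
  · refine le_iSup₂_of_le (ptraceB ρ) ⟨1, ?_⟩ le_rfl
    have : Matrix.kroneckerMap (· * ·) (1 : Matrix α α ℂ) (1 : Matrix β β ℂ) = 1 :=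
      Matrix.one_kronecker_one
    rw [this, one_mul]
  · rw [h1]
    refine iSup₂_le ?_
    rintro O ⟨B, rfl⟩
    let N : Matrix (β × (α × β)) α ℂ :=
      Matrix.of fun p i => ∑ l, star (B p.1 l) * star (C (i, l) p.2)
    have hN : (ptraceB (Matrix.kroneckerMap (· * ·) (1 : Matrix α α ℂ) B * ρ))ᴴ = M * N := by
      ext j i
      simp only [ptraceB, hC, Matrix.conjTranspose_apply, Matrix.of_apply, Matrix.mul_apply, M, N,
        Matrix.kroneckerMap_apply, Fintype.sum_prod_type (α₁ := β), star_sum, star_mul', star_star]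
      refine Finset.sum_congr rfl fun k _ => ?_
      rw [Fintype.sum_prod_type, Finset.sum_eq_single i]
      · simp only [Finset.mul_sum, Matrix.one_apply_eq, star_one, one_mul]
        rw [Finset.sum_comm]
        refine Finset.sum_congr rfl fun q _ => Finset.sum_congr rfl fun l _ => ?_
        ring
      · intro b _ hb
        simp [Matrix.one_apply_ne hb.symm]
      · simp
    rw [msupp, hN, Matrix.mulVecLin_mul]
    exact LinearMap.range_comp_le_range _ _

end QDS
end

section
/- Let W ⊆ B(H) be a linear subspace containing a positive-semidefinite operator ρ ≠ 0 (normalized to a density operator) with supp(ρ) = supp(W). If T : B(H) → B(H) is a CPTP map with W ⊆ fix(T), then F_ρ(W) ⊆ fix(T). -/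
namespace QDS

open Matrix
open scoped ComplexOrder

/-! ### Helper lemmas for Statement 5 -/

section Helpers

variable {ι : Type*} [Fintype ι] [DecidableEq ι]

theorem mpinv_unique {A B C : Matrix ι ι ℂ}
    (hB : A * B * A = A ∧ B * A * B = B ∧ (A * B)ᴴ = A * B ∧ (B * A)ᴴ = B * A)
    (hC : A * C * A = A ∧ C * A * C = C ∧ (A * C)ᴴ = A * C ∧ (C * A)ᴴ = C * A) : B = C := by
  obtain ⟨b1, b2, b3, b4⟩ := hB
  obtain ⟨c1, c2, c3, c4⟩ := hC
  have h1 : A * B = A * C := by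
    have e1 : A * B = (A * C) * (A * B) := by
      rw [← mul_assoc, c1]
    have e2 : A * C = (A * B) * (A * C) := by
      rw [← mul_assoc, b1]
    have e3 := congrArg conjTranspose e1
    rw [conjTranspose_mul (A * C), b3, c3] at e3
    rw [e3, ← e2]
  have h2 : B * A = C * A := by
    have e1 : B * A = (B * A) * (C * A) := by
      rw [mul_assoc, ← mul_assoc A, c1]
    have e2 : C * A = (C * A) * (B * A) := by
      rw [mul_assoc, ← mul_assoc A, b1]
    have e3 := congrArg conjTranspose e1
    rw [conjTranspose_mul (B * A), b4, c4] at e3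
    rw [e3, ← e2]
  calc B = B * A * B := b2.symm
    _ = C * A * C := by rw [h2, mul_assoc, h1, ← mul_assoc]
    _ = C := c2

theorem mpinv_eq {A B : Matrix ι ι ℂ}
    (hB : A * B * A = A ∧ B * A * B = B ∧ (A * B)ᴴ = A * B ∧ (B * A)ᴴ = B * A) :
    mpinv A = B := by
  have h : ∃ B : Matrix ι ι ℂ,
      A * B * A = A ∧ B * A * B = B ∧ (A * B)ᴴ = A * B ∧ (B * A)ᴴ = B * A := ⟨B, hB⟩
  unfold mpinv
  rw [dif_pos h]
  exact mpinv_unique h.choose_spec hB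

theorem conj_mul_conj {U : Matrix ι ι ℂ} (hU : Uᴴ * U = 1) (a b : ι → ℂ) :
    (U * diagonal a * Uᴴ) * (U * diagonal b * Uᴴ) = U * diagonal (fun i => a i * b i) * Uᴴ := by
  calc _ = U * diagonal a * (Uᴴ * U) * diagonal b * Uᴴ := by simp only [mul_assoc]
    _ = _ := by rw [hU, mul_one, mul_assoc U, diagonal_mul_diagonal]

theorem conj_star {U : Matrix ι ι ℂ} (a : ι → ℝ) :
    (U * diagonal (fun i => (a i : ℂ)) * Uᴴ)ᴴ = U * diagonal (fun i => (a i : ℂ)) * Uᴴ := by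
  simp only [conjTranspose_mul, conjTranspose_conjTranspose, diagonal_conjTranspose, mul_assoc]
  congr 3
  ext i
  simp

theorem mpinv_conj {U : Matrix ι ι ℂ} (hU : Uᴴ * U = 1) (a : ι → ℝ) :
    mpinv (U * diagonal (fun i => (a i : ℂ)) * Uᴴ)
      = U * diagonal (fun i => ((a i)⁻¹ : ℂ)) * Uᴴ := by
  have hs : ∀ b : ι → ℂ, (∀ i, star (b i) = b i) →
      (U * diagonal b * Uᴴ)ᴴ = U * diagonal b * Uᴴ := by
    intro b hb
    simp only [conjTranspose_mul, conjTranspose_conjTranspose, diagonal_conjTranspose, mul_assoc]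
    congr 3
    ext i
    simpa using hb i
  apply mpinv_eq
  refine ⟨?_, ?_, ?_, ?_⟩
  · simp only [conj_mul_conj hU]
    congr 3
    ext i
    exact mul_inv_mul_cancel _
  · simp only [conj_mul_conj hU]
    congr 3
    ext i
    by_cases h : (a i : ℂ) = 0 <;> simp [h]
  · simp only [conj_mul_conj hU]
    apply hs
    intro i
    simp
  · simp only [conj_mul_conj hU]
    apply hs
    intro i
    simp

theorem spectral' {A : Matrix ι ι ℂ} (hA : A.PosSemidef) :
    ∃ (U : Matrix ι ι ℂ) (a : ι → ℝ), Uᴴ * U = 1 ∧ U * Uᴴ = 1 ∧ (∀ i, 0 ≤ a i) ∧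
      A = U * diagonal (fun i => (a i : ℂ)) * Uᴴ := by
  refine ⟨hA.1.eigenvectorUnitary, hA.1.eigenvalues, ?_, ?_, hA.eigenvalues_nonneg, ?_⟩
  · exact Unitary.coe_star_mul_self _
  · exact Unitary.coe_mul_star_self _
  · have := hA.1.spectral_theorem
    rw [Unitary.conjStarAlgAut_apply] at this
    exact this

theorem msqrt_spec {A : Matrix ι ι ℂ} (hA : A.PosSemidef) :
    (msqrt A).PosSemidef ∧ msqrt A * msqrt A = A := by
  have h : ∃ B : Matrix ι ι ℂ, B.PosSemidef ∧ B * B = A := by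
    obtain ⟨U, a, h1, h2, h3, h4⟩ := spectral' hA
    refine ⟨U * diagonal (fun i => ((Real.sqrt (a i) : ℝ) : ℂ)) * Uᴴ, ?_, ?_⟩
    · apply PosSemidef.mul_mul_conjTranspose_same
      rw [posSemidef_diagonal_iff]
      intro i
      exact_mod_cast Real.sqrt_nonneg _
    · rw [conj_mul_conj h1, h4]
      congr 3
      ext i
      rw [← Complex.ofReal_mul, Real.mul_self_sqrt (h3 i)]
  unfold msqrt
  rw [dif_pos h]
  exact h.choose_spec

/-- A subspace invariant under `X ↦ ρ X ρ⁻` is invariant under the modular map. -/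
theorem modular_mem {U : Matrix ι ι ℂ} (hU : Uᴴ * U = 1) (hU' : U * Uᴴ = 1)
    (a : ι → ℝ) (ha : ∀ i, 0 ≤ a i) (V : Submodule ℂ (Matrix ι ι ℂ))
    (B B' : Matrix ι ι ℂ) (hB : B = U * diagonal (fun i => (a i : ℂ)) * Uᴴ)
    (hB' : B' = U * diagonal (fun i => ((a i)⁻¹ : ℂ)) * Uᴴ)
    (hV : ∀ X ∈ V, (B * B) * X * (B' * B') ∈ V) :
    ∀ X ∈ V, B * X * B' ∈ V := by
  classical
  intro X hX
  let Δ : Module.End ℂ (Matrix ι ι ℂ) :=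
    (LinearMap.mulRight ℂ (B' * B')).comp (LinearMap.mulLeft ℂ (B * B))
  have hΔ : ∀ Y, Δ Y = (B * B) * Y * (B' * B') := fun Y => rfl
  let r : ι × ι → ℝ := fun p => a p.1 * (a p.2)⁻¹
  have hr : ∀ p, 0 ≤ r p := fun p => mul_nonneg (ha _) (inv_nonneg.2 (ha _))
  let s : Finset ℂ := Finset.univ.image (fun p : ι × ι => ((r p : ℂ)) ^ 2)
  let q : Polynomial ℂ := Lagrange.interpolate s id (fun z => ((Real.sqrt z.re : ℝ) : ℂ))
  have hq : ∀ p, q.eval ((r p : ℂ) ^ 2) = (r p : ℂ) := by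
    intro p
    have := Lagrange.eval_interpolate_at_node (s := s) (v := id) (i := (r p : ℂ) ^ 2)
      (fun z : ℂ => ((Real.sqrt z.re : ℝ) : ℂ)) (Set.injOn_id _)
      (Finset.mem_image_of_mem _ (Finset.mem_univ p))
    simp only [id] at this
    refine this.trans ?_
    rw [← Complex.ofReal_pow, Complex.ofReal_re, Real.sqrt_sq (hr p)]
  have key : ∀ (Y : Matrix ι ι ℂ) (i j : ι),
      (Uᴴ * Δ Y * U) i j = ((r (i, j) : ℂ)) ^ 2 * (Uᴴ * Y * U) i j := by
    intro Y i j
    have e : Uᴴ * Δ Y * U = diagonal (fun i => (a i : ℂ) * a i) * (Uᴴ * Y * U) *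
        diagonal (fun i => (a i : ℂ)⁻¹ * (a i : ℂ)⁻¹) := by
      rw [hΔ, hB, hB', conj_mul_conj hU, conj_mul_conj hU]
      calc _ = (Uᴴ * U) * diagonal (fun i => (a i : ℂ) * a i) * (Uᴴ * Y * U) *
          diagonal (fun i => (a i : ℂ)⁻¹ * (a i : ℂ)⁻¹) * (Uᴴ * U) := by simp only [mul_assoc]
        _ = _ := by rw [hU, one_mul, mul_one]
    rw [e, mul_diagonal, diagonal_mul]
    simp only [r]
    push_cast
    ring
  have key2 : ∀ (p : Polynomial ℂ) (i j : ι),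
      (Uᴴ * (Polynomial.aeval Δ p X) * U) i j
        = p.eval ((r (i, j) : ℂ) ^ 2) * (Uᴴ * X * U) i j := by
    intro p i j
    induction p using Polynomial.induction_on' with
    | add p q hp hq =>
      simp only [map_add, LinearMap.add_apply, mul_add, add_mul, Matrix.add_apply, hp, hq,
        Polynomial.eval_add]
    | monomial n c =>
      rw [Polynomial.aeval_monomial, Polynomial.eval_monomial]
      have : ∀ n : ℕ, (Uᴴ * ((Δ ^ n) X) * U) i j
          = ((r (i, j) : ℂ) ^ 2) ^ n * (Uᴴ * X * U) i j := by
        intro n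
        induction n with
        | zero => simp
        | succ n ih =>
          rw [pow_succ', Module.End.mul_apply, key, ih]
          ring
      rw [Module.End.mul_apply, Module.algebraMap_end_apply]
      simp only [mul_smul_comm, smul_mul_assoc, Matrix.smul_apply, this, smul_eq_mul]
      ring
  have hmem : ∀ p : Polynomial ℂ, Polynomial.aeval Δ p X ∈ V := by
    intro p
    induction p using Polynomial.induction_on' with
    | add p q hp hq =>
      simp only [map_add, LinearMap.add_apply]
      exact V.add_mem hp hq
    | monomial n c =>
      rw [Polynomial.aeval_monomial, Module.End.mul_apply, Module.algebraMap_end_apply]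
      apply V.smul_mem
      induction n with
      | zero => simpa using hX
      | succ n ih =>
        rw [pow_succ', Module.End.mul_apply, hΔ]
        exact hV _ ih
  have e1 : Uᴴ * (Polynomial.aeval Δ q X) * U = Uᴴ * (B * X * B') * U := by
    have e : Uᴴ * (B * X * B') * U = diagonal (fun i => (a i : ℂ)) * (Uᴴ * X * U) *
        diagonal (fun i => ((a i)⁻¹ : ℂ)) := by
      rw [hB, hB']
      calc _ = (Uᴴ * U) * diagonal (fun i => (a i : ℂ)) * (Uᴴ * X * U) *
          diagonal (fun i => ((a i)⁻¹ : ℂ)) * (Uᴴ * U) := by simp only [mul_assoc]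
        _ = _ := by rw [hU, one_mul, mul_one]
    ext i j
    rw [key2, hq, e, mul_diagonal, diagonal_mul]
    simp only [r]
    push_cast
    ring
  have e2 : ∀ Y : Matrix ι ι ℂ, U * (Uᴴ * Y * U) * Uᴴ = Y := by
    intro Y
    calc _ = (U * Uᴴ) * Y * (U * Uᴴ) := by simp only [mul_assoc]
      _ = Y := by rw [hU', one_mul, mul_one]
  rw [← e2 (B * X * B'), ← e1, e2]
  exact hmem q

/-- Vanishing of a sum of nonnegative traces. -/
theorem all_zero {m : ℕ} {ρ B : Matrix ι ι ℂ} (hB : Bᴴ = B) (hBρ : B * B = ρ)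
    (Y : Fin m → Matrix ι ι ℂ) (h : (∑ k, Y k * ρ * (Y k)ᴴ).trace = 0) (k : Fin m) :
    Y k * ρ = 0 := by
  have h1 : ∀ k, Y k * ρ * (Y k)ᴴ = (Y k * B) * (Y k * B)ᴴ := by
    intro k
    rw [conjTranspose_mul, hB, ← hBρ]
    simp only [mul_assoc]
  rw [trace_sum] at h
  simp only [h1] at h
  rw [Finset.sum_eq_zero_iff_of_nonneg
    (fun k _ => (posSemidef_self_mul_conjTranspose _).trace_nonneg)] at h
  have h2 := h k (Finset.mem_univ k)
  rw [trace_mul_conjTranspose_self_eq_zero_iff] at h2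
  rw [← hBρ, ← mul_assoc, h2, zero_mul]

/-- Kraus data with an invariant `ρ = B²`, with pseudoinverse `R`. -/
structure Setup (m : ℕ) (M : Fin m → Matrix ι ι ℂ) (T : Matrix ι ι ℂ →ₗ[ℂ] Matrix ι ι ℂ)
    (ρ B R P : Matrix ι ι ℂ) : Prop where
  hT : ∀ X, T X = ∑ k, M k * X * (M k)ᴴ
  hM : (∑ k, (M k)ᴴ * M k) = 1
  hρ : T ρ = ρ
  ρs : ρᴴ = ρ
  Bs : Bᴴ = B
  BB : B * B = ρ
  Rs : Rᴴ = R
  Ps : Pᴴ = P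
  ρR : ρ * R = P
  Rρ : R * ρ = P
  Pρ : P * ρ = ρ
  ρP : ρ * P = ρ
  RP : R * P = R
  PR : P * R = R
  PP : P * P = P

namespace Setup

variable {m : ℕ} {M : Fin m → Matrix ι ι ℂ} {T : Matrix ι ι ℂ →ₗ[ℂ] Matrix ι ι ℂ}
    {ρ B R P : Matrix ι ι ℂ}

theorem T_star (S : Setup m M T ρ B R P) (X : Matrix ι ι ℂ) : T Xᴴ = (T X)ᴴ := by
  simp only [S.hT, conjTranspose_sum, conjTranspose_mul, conjTranspose_conjTranspose, mul_assoc]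

theorem T_trace (S : Setup m M T ρ B R P) (X : Matrix ι ι ℂ) : (T X).trace = X.trace := by
  rw [S.hT, trace_sum]
  have : ∀ k, (M k * X * (M k)ᴴ).trace = ((M k)ᴴ * M k * X).trace := by
    intro k
    rw [trace_mul_comm, mul_assoc]
  simp only [this]
  rw [← trace_sum, ← Finset.sum_mul, S.hM, one_mul]

theorem sand (S : Setup m M T ρ B R P) (C D : Matrix ι ι ℂ) :
    ∑ k, (C * M k * ρ) * (M k)ᴴ * D = C * ρ * D := by
  conv_rhs => rw [← S.hρ, S.hT]
  rw [Finset.mul_sum, Finset.sum_mul]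
  simp only [mul_assoc]

theorem lem1 (S : Setup m M T ρ B R P) (k : Fin m) : P * (M k * ρ) = M k * ρ := by
  have h := all_zero S.Bs S.BB (fun k => (1 - P) * M k) (by
    have e : ∀ k, (1 - P) * M k * ρ * ((1 - P) * M k)ᴴ
        = (1 - P) * M k * ρ * (M k)ᴴ * (1 - P) := by
      intro k
      simp only [conjTranspose_mul, conjTranspose_sub, S.Ps, conjTranspose_one, mul_assoc]
    simp only [e]
    rw [S.sand, sub_mul, one_mul, S.Pρ, sub_self, zero_mul, trace_zero]) k
  simp only [sub_mul, one_mul, mul_assoc] at h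
  exact (sub_eq_zero.1 h).symm

theorem lem2 (S : Setup m M T ρ B R P) {C : Matrix ι ι ℂ} (hC : T (C * ρ) = C * ρ) (k : Fin m) :
    M k * C * ρ = C * M k * ρ := by
  have hC' : T (ρ * Cᴴ) = ρ * Cᴴ := by
    have := S.T_star (C * ρ)
    rwa [hC, conjTranspose_mul, S.ρs] at this
  have h := all_zero S.Bs S.BB (fun k => M k * C - C * M k) (by
    have e : ∑ k, (M k * C - C * M k) * ρ * (M k * C - C * M k)ᴴ
        = T (C * ρ * Cᴴ) - T (C * ρ) * Cᴴ - C * T (ρ * Cᴴ) + C * T ρ * Cᴴ := by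
      simp only [S.hT, Finset.mul_sum, Finset.sum_mul]
      rw [← Finset.sum_sub_distrib, ← Finset.sum_sub_distrib, ← Finset.sum_add_distrib]
      refine Finset.sum_congr rfl fun k _ => ?_
      simp only [conjTranspose_mul, conjTranspose_sub]
      noncomm_ring
    rw [e, hC, hC', S.hρ, ← mul_assoc, sub_sub, trace_add, trace_sub, S.T_trace, trace_add]
    ring) k
  rw [sub_mul] at h
  exact sub_eq_zero.1 h

theorem lemconv (S : Setup m M T ρ B R P) {C D : Matrix ι ι ℂ}
    (hC : ∀ k, M k * C * ρ = C * M k * ρ) (hD : ∀ k, M k * D * ρ = D * M k * ρ) :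
    T (C * ρ * Dᴴ) = C * ρ * Dᴴ := by
  rw [S.hT]
  refine Eq.trans ?_ (S.sand C Dᴴ)
  refine Finset.sum_congr rfl fun k _ => ?_
  have h := congrArg conjTranspose (hD k)
  simp only [conjTranspose_mul, S.ρs] at h
  have hR : ∀ Z : Matrix ι ι ℂ, C * M k * ρ * Z = M k * C * ρ * Z := by
    intro Z
    rw [hC]
  calc M k * (C * ρ * Dᴴ) * (M k)ᴴ = M k * C * ρ * (Dᴴ * (M k)ᴴ) := by simp only [mul_assoc]
    _ = C * M k * (ρ * (Dᴴ * (M k)ᴴ)) := by rw [hC, mul_assoc]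
    _ = C * M k * ρ * (M k)ᴴ * Dᴴ := by rw [h]; simp only [mul_assoc]

theorem lemconv1 (S : Setup m M T ρ B R P) {C : Matrix ι ι ℂ}
    (hC : ∀ k, M k * C * ρ = C * M k * ρ) : T (C * ρ) = C * ρ := by
  have := S.lemconv (D := 1) hC (fun k => by rw [mul_one, one_mul])
  rwa [conjTranspose_one, mul_one] at this

theorem MP (S : Setup m M T ρ B R P) (k : Fin m) : P * (M k * P) = M k * P := by
  rw [← S.ρR, ← mul_assoc (M k), ← mul_assoc, S.ρR, S.lem1]

theorem lem3 (S : Setup m M T ρ B R P) {C : Matrix ι ι ℂ} (hC : T (C * ρ) = C * ρ) :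
    T (P * C * ρ) = P * C * ρ := by
  have h2 := S.lem2 hC
  -- the lower component
  have hb : ∀ k, (1 - P) * M k * ((1 - P) * C) * ρ = (1 - P) * C * M k * ρ := by
    intro k
    have e : (1 - P) * C * M k * ρ = (1 - P) * (M k * C * ρ) := by
      rw [h2]; simp only [mul_assoc]
    have e' : (1 - P) * (M k * P) = 0 := by
      rw [sub_mul, one_mul, S.MP, sub_self]
    rw [e]
    calc _ = (1 - P) * (M k * C * ρ) - (1 - P) * (M k * P) * (C * ρ) := by noncomm_ring
      _ = _ := by rw [e', zero_mul, sub_zero]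
  have h := all_zero S.Bs S.BB (fun k => P * M k * ((1 - P) * C)) (by
    set β := (1 - P) * C with hβ
    have e : ∀ k, (P * M k * β * ρ * (P * M k * β)ᴴ).trace
        = (M k * (β * ρ * βᴴ) * (M k)ᴴ).trace - ((β * M k * ρ) * (M k)ᴴ * βᴴ).trace := by
      intro k
      have e1 : (β * M k * ρ) * (M k)ᴴ * βᴴ
          = ((1 - P) * M k * β * ρ) * βᴴ * (M k)ᴴ * (1 - P) := by
        have h := congrArg conjTranspose (hb k)
        simp only [conjTranspose_mul, S.ρs, conjTranspose_sub, conjTranspose_one, S.Ps] at h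
        calc _ = β * M k * (ρ * ((M k)ᴴ * βᴴ)) := by simp only [mul_assoc]
          _ = β * M k * (ρ * (βᴴ * ((M k)ᴴ * (1 - P)))) := by rw [h]
          _ = (β * M k * ρ) * (βᴴ * ((M k)ᴴ * (1 - P))) := by simp only [mul_assoc]
          _ = _ := by rw [← hb]; simp only [mul_assoc]
      have QQ : (1 - P) * (1 - P) = 1 - P := by
        rw [sub_mul, mul_sub, one_mul, mul_sub, S.PP, mul_one, sub_self, sub_zero, one_mul]
      have e2 : (((1 - P) * M k * β * ρ) * βᴴ * (M k)ᴴ * (1 - P)).trace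
          = ((1 - P) * (M k * (β * ρ * βᴴ) * (M k)ᴴ)).trace := by
        rw [trace_mul_comm]
        conv_rhs => rw [← QQ]
        simp only [mul_assoc]
      have e3 : (P * M k * β * ρ * (P * M k * β)ᴴ).trace
          = (P * (M k * (β * ρ * βᴴ) * (M k)ᴴ)).trace := by
        have : P * M k * β * ρ * (P * M k * β)ᴴ
            = (P * M k * β * ρ * βᴴ * (M k)ᴴ) * P := by
          simp only [conjTranspose_mul, S.Ps, mul_assoc]
        rw [this, trace_mul_comm]
        conv_rhs => rw [← S.PP]
        simp only [mul_assoc]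
      rw [e1, e2, e3, sub_mul, one_mul, trace_sub]
      ring
    rw [trace_sum]
    simp only [e]
    rw [Finset.sum_sub_distrib, ← trace_sum, ← trace_sum, S.sand, ← S.hT, S.T_trace, sub_self])
  apply S.lemconv1
  intro k
  have hk := h k
  calc M k * (P * C) * ρ = (M k * P) * (C * ρ) := by simp only [mul_assoc]
    _ = P * (M k * P) * (C * ρ) := by rw [S.MP]
    _ = P * (M k * C * ρ) - P * M k * ((1 - P) * C) * ρ := by noncomm_ring
    _ = P * C * M k * ρ := by rw [hk, sub_zero, h2]; simp only [mul_assoc]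

theorem lem4 (S : Setup m M T ρ B R P) {C : Matrix ι ι ℂ} (hC : T (C * ρ) = C * ρ)
    (hPC : P * C = C) (hCP : C * P = C) : T (Cᴴ * ρ) = Cᴴ * ρ := by
  have h2 := S.lem2 hC
  let A : Fin m → Matrix ι ι ℂ := fun k => M k * P
  have hA : ∀ k, A k = M k * P := fun _ => rfl
  have hPC' : P * Cᴴ = Cᴴ := by
    have := congrArg conjTranspose hCP
    rwa [conjTranspose_mul, S.Ps] at this
  have hAC : ∀ k, A k * C = C * A k := by
    intro k
    calc A k * C = M k * C := by rw [hA, mul_assoc, hPC]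
      _ = M k * C * P := by rw [mul_assoc, hCP]
      _ = M k * C * ρ * R := by rw [← S.ρR]; simp only [mul_assoc]
      _ = C * M k * ρ * R := by rw [h2]
      _ = C * A k := by rw [hA, ← S.ρR]; simp only [mul_assoc]
  have hAA : ∑ k, (A k)ᴴ * A k = P := by
    calc ∑ k, (A k)ᴴ * A k = P * (∑ k, (M k)ᴴ * M k) * P := by
          rw [Finset.mul_sum, Finset.sum_mul]
          refine Finset.sum_congr rfl fun k _ => ?_
          simp only [hA, conjTranspose_mul, S.Ps, mul_assoc]
      _ = P := by rw [S.hM, mul_one, S.PP]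
  have hf : ∑ k, (A k)ᴴ * C * A k = C := by
    calc _ = ∑ k, (A k)ᴴ * A k * C := by
          refine Finset.sum_congr rfl fun k _ => ?_
          rw [mul_assoc, ← hAC, ← mul_assoc]
      _ = C := by rw [← Finset.sum_mul, hAA, hPC]
  have hf' : ∑ k, (A k)ᴴ * Cᴴ * A k = Cᴴ := by
    have := congrArg conjTranspose hf
    simpa only [conjTranspose_sum, conjTranspose_mul, conjTranspose_conjTranspose, mul_assoc]
      using this
  have h := all_zero S.Bs S.BB (fun k => A k * Cᴴ - Cᴴ * A k) (by
    have e0 : ∀ k, ((A k * Cᴴ - Cᴴ * A k) * ρ * (A k * Cᴴ - Cᴴ * A k)ᴴ).trace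
        = (ρ * ((A k * Cᴴ - Cᴴ * A k)ᴴ * (A k * Cᴴ - Cᴴ * A k))).trace := by
      intro k
      rw [mul_assoc, trace_mul_comm, mul_assoc]
    have e : ∑ k, (A k * Cᴴ - Cᴴ * A k)ᴴ * (A k * Cᴴ - Cᴴ * A k)
        = C * (∑ k, (A k)ᴴ * A k) * Cᴴ - C * (∑ k, (A k)ᴴ * Cᴴ * A k)
          - (∑ k, (A k)ᴴ * C * A k) * Cᴴ + ∑ k, (A k)ᴴ * (C * Cᴴ) * A k := by
      simp only [Finset.mul_sum, Finset.sum_mul]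
      rw [← Finset.sum_sub_distrib, ← Finset.sum_sub_distrib, ← Finset.sum_add_distrib]
      refine Finset.sum_congr rfl fun k _ => ?_
      simp only [conjTranspose_mul, conjTranspose_sub, conjTranspose_conjTranspose]
      noncomm_ring
    rw [trace_sum]
    simp only [e0]
    rw [← trace_sum, ← Finset.mul_sum, e, hAA, hf, hf', hCP, sub_self, zero_sub, mul_add,
      trace_add, Finset.mul_sum, trace_sum]
    have e1 : ∀ k, (ρ * ((A k)ᴴ * (C * Cᴴ) * A k)).trace
        = ((1 * M k * ρ) * (M k)ᴴ * (C * Cᴴ)).trace := by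
      intro k
      rw [← mul_assoc, trace_mul_comm]
      have : A k * (ρ * ((A k)ᴴ * (C * Cᴴ))) = M k * (P * ρ * P) * ((M k)ᴴ * (C * Cᴴ)) := by
        simp only [hA, conjTranspose_mul, S.Ps, mul_assoc]
      rw [this, S.Pρ, S.ρP]
      simp only [mul_assoc, one_mul]
    simp only [e1]
    rw [← trace_sum, S.sand, one_mul, mul_neg, trace_neg, neg_add_cancel])
  apply S.lemconv1
  intro k
  have hk := h k
  rw [sub_mul] at hk
  have hk' := sub_eq_zero.1 hk
  calc M k * Cᴴ * ρ = A k * Cᴴ * ρ := by rw [hA, mul_assoc (M k) P, hPC']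
    _ = Cᴴ * A k * ρ := hk'
    _ = Cᴴ * M k * (P * ρ) := by rw [hA]; simp only [mul_assoc]
    _ = Cᴴ * M k * ρ := by rw [S.Pρ]

theorem prod (S : Setup m M T ρ B R P) {X Y : Matrix ι ι ℂ} (hX : T (X * P) = X * P)
    (hY : T (P * Y) = P * Y) : T (X * R * Y) = X * R * Y := by
  have h1 : T (X * R * ρ) = X * R * ρ := by rw [mul_assoc, S.Rρ, hX]
  have h2 : T (Yᴴ * R * ρ) = Yᴴ * R * ρ := by
    have := S.T_star (P * Y)
    rwa [hY, conjTranspose_mul, S.Ps, ← S.Rρ, ← mul_assoc] at this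
  have h := S.lemconv (S.lem2 h1) (S.lem2 h2)
  have e : X * R * ρ * (Yᴴ * R)ᴴ = X * R * Y := by
    rw [conjTranspose_mul, conjTranspose_conjTranspose, S.Rs]
    calc _ = X * (R * ρ * R) * Y := by simp only [mul_assoc]
      _ = _ := by rw [S.Rρ, S.PR]
  rwa [e] at h

theorem compress (S : Setup m M T ρ B R P) {X : Matrix ι ι ℂ} (hX : T (X * P) = X * P) :
    T (P * X * P) = P * X * P := by
  have h1 : T (X * R * ρ) = X * R * ρ := by rw [mul_assoc, S.Rρ, hX]
  have h := S.lem3 h1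
  have e : P * (X * R) * ρ = P * X * P := by
    rw [← S.Rρ]; simp only [mul_assoc]
  rwa [e] at h

theorem modul (S : Setup m M T ρ B R P) {X : Matrix ι ι ℂ} (hX : T (X * P) = X * P) :
    T (ρ * X * R) = ρ * X * R := by
  have h := S.compress hX
  have h1 : T (P * X * R * ρ) = P * X * R * ρ := by rw [mul_assoc (P * X), S.Rρ, h]
  have h4 := S.lem4 h1 (by rw [← mul_assoc, ← mul_assoc, S.PP]) (by rw [mul_assoc, S.RP])
  have := S.T_star ((P * X * R)ᴴ * ρ)
  rw [h4, conjTranspose_mul, conjTranspose_conjTranspose, S.ρs] at this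
  have e : ρ * (P * X * R) = ρ * X * R := by
    rw [← mul_assoc, ← mul_assoc, S.ρP]
  rwa [e] at this

/-- The invariant subspace used to bound `F_ρ(W)`. -/
def sub (T : Matrix ι ι ℂ →ₗ[ℂ] Matrix ι ι ℂ) (P : Matrix ι ι ℂ) :
    Submodule ℂ (Matrix ι ι ℂ) where
  carrier := {X | T X = X ∧ T (X * P) = X * P ∧ T (P * X) = P * X}
  add_mem' := by
    rintro X Y ⟨h1, h2, h3⟩ ⟨g1, g2, g3⟩
    refine ⟨?_, ?_, ?_⟩
    · rw [map_add, h1, g1]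
    · rw [add_mul, map_add, h2, g2]
    · rw [mul_add, map_add, h3, g3]
  zero_mem' := by simp
  smul_mem' := by
    rintro c X ⟨h1, h2, h3⟩
    refine ⟨?_, ?_, ?_⟩
    · rw [map_smul, h1]
    · rw [smul_mul_assoc, map_smul, h2]
    · rw [mul_smul_comm, map_smul, h3]

theorem sub_star (S : Setup m M T ρ B R P) {X : Matrix ι ι ℂ} (hX : X ∈ sub T P) :
    Xᴴ ∈ sub T P := by
  obtain ⟨h1, h2, h3⟩ := hX
  refine ⟨?_, ?_, ?_⟩
  · rw [S.T_star, h1]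
  · have := S.T_star (P * X)
    rwa [h3, conjTranspose_mul, S.Ps] at this
  · have := S.T_star (X * P)
    rwa [h2, conjTranspose_mul, S.Ps] at this

theorem sub_prod (S : Setup m M T ρ B R P) {X Y : Matrix ι ι ℂ} (hX : X ∈ sub T P)
    (hY : Y ∈ sub T P) : X * R * Y ∈ sub T P := by
  obtain ⟨h1, h2, h3⟩ := hX
  obtain ⟨g1, g2, g3⟩ := hY
  refine ⟨S.prod h2 g3, ?_, ?_⟩
  · have := S.prod (X := X) (Y := Y * P) h2 (by rw [← mul_assoc]; exact S.compress g2)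
    rwa [← mul_assoc] at this
  · have := S.prod (X := P * X) (Y := Y) (S.compress h2) g3
    simpa only [mul_assoc] using this

theorem sub_mod (S : Setup m M T ρ B R P) {X : Matrix ι ι ℂ} (hX : X ∈ sub T P) :
    ρ * X * R ∈ sub T P := by
  obtain ⟨h1, h2, h3⟩ := hX
  refine ⟨S.modul h2, ?_, ?_⟩
  · rw [mul_assoc, S.RP, S.modul h2]
  · rw [← mul_assoc, ← mul_assoc, S.Pρ, S.modul h2]

end Setup

end Helpers

/-! ### Statement 5 -/

theorem stmt5
    {ι : Type*} [Fintype ι] [DecidableEq ι]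
    (W : Submodule ℂ (Matrix ι ι ℂ)) (ρ : Matrix ι ι ℂ) (hρ : IsDensity ρ)
    (hρW : ρ ∈ W) (hsupp : msupp ρ = suppSet (W : Set (Matrix ι ι ℂ)))
    (T : Matrix ι ι ℂ →ₗ[ℂ] Matrix ι ι ℂ) (hT : IsCPTP T)
    (hfix : (W : Set (Matrix ι ι ℂ)) ⊆ fixSet T) :
    (Fdist ρ (W : Set (Matrix ι ι ℂ)) : Set (Matrix ι ι ℂ)) ⊆ fixSet T := by
  obtain ⟨m, M, hTM, hM⟩ := hT
  obtain ⟨hBpos, hBB⟩ := msqrt_spec hρ.1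
  obtain ⟨U, a, hU, hU', ha, hB⟩ := spectral' hBpos
  have hB' := mpinv_conj hU a
  rw [← hB] at hB'
  have hρU : ρ = U * diagonal (fun i => ((a i * a i : ℝ) : ℂ)) * Uᴴ := by
    conv_lhs => rw [← hBB, hB]
    rw [conj_mul_conj hU]
    push_cast
    rfl
  have hRU : mpinv ρ = mpinv (msqrt ρ) * mpinv (msqrt ρ) := by
    rw [hB', conj_mul_conj hU]
    conv_lhs => rw [hρU]
    rw [mpinv_conj hU]
    congr 3
    ext i
    push_cast
    rw [mul_inv]
  have hRc : mpinv ρ = U * diagonal (fun i => (((a i * a i)⁻¹ : ℝ) : ℂ)) * Uᴴ := by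
    conv_lhs => rw [hρU]
    rw [mpinv_conj hU]
    push_cast
    rfl
  have hP1 : ρ * mpinv ρ = U * diagonal (fun i => (((a i * a i) * (a i * a i)⁻¹ : ℝ) : ℂ)) * Uᴴ := by
    rw [hRc]
    conv_lhs => rw [hρU]
    rw [conj_mul_conj hU]
    push_cast
    rfl
  have S : Setup m M T ρ (msqrt ρ) (mpinv ρ) (ρ * mpinv ρ) := by
    have hc : mpinv ρ * ρ = ρ * mpinv ρ := by
      rw [hP1, hRc]
      conv_lhs => rw [hρU]
      rw [conj_mul_conj hU]
      congr 3
      ext i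
      push_cast
      ring
    have hρRρ : ρ * mpinv ρ * ρ = ρ := by
      rw [hP1]
      conv_lhs => rw [hρU]
      conv_rhs => rw [hρU]
      rw [conj_mul_conj hU]
      congr 3
      ext i
      rw [← Complex.ofReal_mul, mul_inv_mul_cancel]
    have hRρR : mpinv ρ * ρ * mpinv ρ = mpinv ρ := by
      rw [hc, hP1, hRc, conj_mul_conj hU]
      congr 3
      ext i
      rw [← Complex.ofReal_mul]
      by_cases h : a i * a i = 0
      · rw [h]; simp
      · rw [mul_inv_cancel₀ h, one_mul]
    exact
      { hT := hTM
        hM := hM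
        hρ := hfix hρW
        ρs := hρ.1.1
        Bs := hBpos.1
        BB := hBB
        Rs := by rw [hRc]; exact conj_star _
        Ps := by rw [hP1]; exact conj_star _
        ρR := rfl
        Rρ := hc
        Pρ := hρRρ
        ρP := by rw [← hc, ← mul_assoc, hρRρ]
        RP := by rw [← mul_assoc, hRρR]
        PR := by rw [← hc, hRρR]
        PP := by rw [← mul_assoc, hρRρ] }
  have hmem : Setup.sub T (ρ * mpinv ρ) ∈ {S : Submodule ℂ (Matrix ι ι ℂ) |
      (W : Set (Matrix ι ι ℂ)) ⊆ S ∧ (∀ X ∈ S, Xᴴ ∈ S) ∧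
      (∀ X ∈ S, ∀ Y ∈ S, X * mpinv ρ * Y ∈ S) ∧
      (∀ X ∈ S, msqrt ρ * X * mpinv (msqrt ρ) ∈ S)} := by
    refine ⟨?_, fun X hX => S.sub_star hX, fun X hX Y hY => S.sub_prod hX hY, ?_⟩
    · intro X hX
      have hXs : msupp X ≤ msupp ρ := by
        rw [hsupp]
        exact le_iSup₂_of_le (f := fun (O : Matrix ι ι ℂ) (_ : O ∈ (W : Set (Matrix ι ι ℂ))) =>
          msupp O) X hX le_rfl
      have hPX : ρ * mpinv ρ * Xᴴ = Xᴴ := by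
        apply Matrix.mulVec_injective
        funext v
        obtain ⟨w, hw⟩ := hXs (LinearMap.mem_range_self (Xᴴ).mulVecLin v)
        simp only [mulVecLin_apply, S.ρs] at hw
        rw [← mulVec_mulVec, ← hw, mulVec_mulVec, S.Pρ]
      have hXP : X * (ρ * mpinv ρ) = X := by
        have := congrArg conjTranspose hPX
        rwa [conjTranspose_mul, S.Ps, conjTranspose_conjTranspose] at this
      have hTX : T X = X := hfix hX
      have h2 : T (X * (ρ * mpinv ρ)) = X * (ρ * mpinv ρ) := by rw [hXP, hTX]
      refine ⟨hTX, h2, ?_⟩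
      have := S.compress h2
      rwa [mul_assoc (ρ * mpinv ρ) X, hXP] at this
    · refine modular_mem hU hU' a ha _ _ _ hB hB' ?_
      intro X hX
      rw [hBB, ← hRU]
      exact S.sub_mod hX
  intro X hX
  exact ((sInf_le hmem : Fdist ρ (W : Set (Matrix ι ι ℂ)) ≤ _) hX).1

end QDS
end

section
/- Let H = H_N ⊗ H_N̄ be a finite-dimensional bipartite Hilbert space and let L_j = L_N ⊗ I_N̄ be a neighborhood QDS generator, i.e., a QDS generator admitting a Lindblad representation in which the Hamiltonian and all noise operators have the form X_N ⊗ I_N̄. If a density operator ρ on H satisfies L_j(ρ) = 0, then F_{ρ_N}(Σ_N(ρ)) ⊗ B(H_N̄) ⊆ ker(L_j), where ρ_N = Tr_N̄(ρ) and Σ_N(ρ) = {Tr_N̄[(I_N ⊗ B)ρ] : B ∈ B(H_N̄)} is the operator Schmidt span of ρ on N. -/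
namespace QDS

open Matrix
open scoped ComplexOrder

/-! ### Auxiliary lemmas for Statement 6 -/

section Aux

/-- Lindblad-type generator in effective form. -/
noncomputable def effGen {r : Type*} [Fintype r] {m : ℕ}
    (G : Matrix r r ℂ) (L : Fin m → Matrix r r ℂ) : Matrix r r ℂ →ₗ[ℂ] Matrix r r ℂ where
  toFun X := G * X + X * Gᴴ + ∑ k, L k * X * (L k)ᴴ
  map_add' X Y := by
    simp only [Matrix.mul_add, Matrix.add_mul, Finset.sum_add_distrib]
    abel
  map_smul' c X := by
    simp only [Matrix.mul_smul, Matrix.smul_mul, ← Finset.smul_sum, RingHom.id_apply, smul_add]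

/-- The dual generator. -/
noncomputable def effDual {r : Type*} [Fintype r] {m : ℕ}
    (G : Matrix r r ℂ) (L : Fin m → Matrix r r ℂ) : Matrix r r ℂ →ₗ[ℂ] Matrix r r ℂ where
  toFun X := Gᴴ * X + X * G + ∑ k, (L k)ᴴ * X * L k
  map_add' X Y := by
    simp only [Matrix.mul_add, Matrix.add_mul, Finset.sum_add_distrib]
    abel
  map_smul' c X := by
    simp only [Matrix.mul_smul, Matrix.smul_mul, ← Finset.smul_sum, RingHom.id_apply, smul_add]

theorem effGen_apply {r : Type*} [Fintype r] {m : ℕ}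
    (G : Matrix r r ℂ) (L : Fin m → Matrix r r ℂ) (X : Matrix r r ℂ) :
    effGen G L X = G * X + X * Gᴴ + ∑ k, L k * X * (L k)ᴴ := rfl

theorem effDual_apply {r : Type*} [Fintype r] {m : ℕ}
    (G : Matrix r r ℂ) (L : Fin m → Matrix r r ℂ) (X : Matrix r r ℂ) :
    effDual G L X = Gᴴ * X + X * G + ∑ k, (L k)ᴴ * X * L k := rfl

theorem effGen_star {r : Type*} [Fintype r] {m : ℕ}
    (G : Matrix r r ℂ) (L : Fin m → Matrix r r ℂ) (X : Matrix r r ℂ) :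
    effGen G L Xᴴ = (effGen G L X)ᴴ := by
  simp only [effGen_apply, conjTranspose_add, conjTranspose_mul, conjTranspose_sum,
    conjTranspose_conjTranspose, Matrix.mul_assoc]
  abel

theorem effDual_star {r : Type*} [Fintype r] {m : ℕ}
    (G : Matrix r r ℂ) (L : Fin m → Matrix r r ℂ) (X : Matrix r r ℂ) :
    effDual G L Xᴴ = (effDual G L X)ᴴ := by
  simp only [effDual_apply, conjTranspose_add, conjTranspose_mul, conjTranspose_sum,
    conjTranspose_conjTranspose, Matrix.mul_assoc]
  abel

theorem effGen_trace {r : Type*} [Fintype r] {m : ℕ}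
    (G : Matrix r r ℂ) (L : Fin m → Matrix r r ℂ) (Y Z : Matrix r r ℂ) :
    (effGen G L Y * Z).trace = (Y * effDual G L Z).trace := by
  simp only [effGen_apply, effDual_apply, Matrix.add_mul, Matrix.mul_add, Finset.sum_mul,
    Finset.mul_sum, trace_add, trace_sum]
  have h1 : (G * Y * Z).trace = (Y * (Z * G)).trace := by
    rw [Matrix.mul_assoc, trace_mul_comm, Matrix.mul_assoc]
  have h2 : (Y * Gᴴ * Z).trace = (Y * (Gᴴ * Z)).trace := by rw [Matrix.mul_assoc]
  have h3 : ∀ k, (L k * Y * (L k)ᴴ * Z).trace = (Y * ((L k)ᴴ * Z * L k)).trace := by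
    intro k
    rw [Matrix.mul_assoc, Matrix.mul_assoc, trace_mul_comm]
    simp only [Matrix.mul_assoc]
  simp only [h1, h2, h3]
  ring

theorem finrank_map_inj {M N : Type*} [AddCommGroup M] [Module ℂ M] [AddCommGroup N] [Module ℂ N]
    (f : M →ₗ[ℂ] N) (hf : Function.Injective f) (p : Submodule ℂ M) :
    Module.finrank ℂ (p.map f) = Module.finrank ℂ p :=
  (Submodule.equivMapOfInjective f hf p).finrank_eq.symm

theorem effDual_ker_finrank {r : Type*} [Fintype r] [DecidableEq r] {m : ℕ}
    (G : Matrix r r ℂ) (L : Fin m → Matrix r r ℂ) :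
    Module.finrank ℂ (LinearMap.ker (effDual G L)) =
      Module.finrank ℂ (LinearMap.ker (effGen G L)) := by
  let Φ : Matrix r r ℂ →ₗ[ℂ] Module.Dual ℂ (Matrix r r ℂ) :=
    LinearMap.mk₂ ℂ (fun Z Y => (Y * Z).trace)
      (by intros; simp [Matrix.mul_add]) (by intros; simp)
      (by intros; simp [Matrix.add_mul]) (by intros; simp)
  have hΦ : ∀ Z Y, Φ Z Y = (Y * Z).trace := fun _ _ => rfl
  have hinj : Function.Injective Φ := by
    rw [← LinearMap.ker_eq_bot, LinearMap.ker_eq_bot']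
    intro Z hZ
    have := congrArg (fun f => f Zᴴ) hZ
    simpa [hΦ, trace_conjTranspose_mul_self_eq_zero_iff] using this
  have hfr : Module.finrank ℂ (Matrix r r ℂ) =
      Module.finrank ℂ (Module.Dual ℂ (Matrix r r ℂ)) := Subspace.dual_finrank_eq.symm
  let Φe := LinearEquiv.ofInjectiveOfFinrankEq Φ hinj hfr
  have hcomm : (effGen G L).dualMap ∘ₗ Φ = Φ ∘ₗ effDual G L := by
    refine LinearMap.ext fun Z => LinearMap.ext fun Y => ?_
    simp [hΦ, effGen_trace]
  have hk : LinearMap.ker (effDual G L) =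
      (LinearMap.ker (effGen G L).dualMap).comap Φ := by
    ext Z
    simp only [LinearMap.mem_ker, Submodule.mem_comap]
    have := congrArg (fun f => f Z) hcomm
    simp only [LinearMap.comp_apply] at this
    rw [this]
    constructor
    · intro h; rw [h, map_zero]
    · intro h; exact hinj (by rw [h, map_zero])
  have hΦs : Function.Surjective Φ := (LinearMap.injective_iff_surjective_of_finrank_eq_finrank hfr).1 hinj
  have hk2 : Module.finrank ℂ (LinearMap.ker (effDual G L)) =
      Module.finrank ℂ (LinearMap.ker (effGen G L).dualMap) := by
    rw [← finrank_map_inj Φ hinj (LinearMap.ker (effDual G L)), hk,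
      Submodule.map_comap_eq_of_surjective hΦs]
  have e1 := LinearMap.finrank_range_add_finrank_ker (effGen G L)
  have e2 := LinearMap.finrank_range_add_finrank_ker (effGen G L).dualMap
  have e3 := LinearMap.finrank_range_dualMap_eq_finrank_range (effGen G L)
  omega

theorem diss_identity {r : Type*} [Fintype r] [DecidableEq r] {m : ℕ}
    (G : Matrix r r ℂ) (L : Fin m → Matrix r r ℂ)
    (hG : G + Gᴴ + ∑ k, (L k)ᴴ * L k = 0) (X : Matrix r r ℂ) :
    ∑ k, (L k * X - X * L k)ᴴ * (L k * X - X * L k) =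
      effDual G L (Xᴴ * X) - Xᴴ * effDual G L X - effDual G L Xᴴ * X := by
  have hG' : ∑ k, (L k)ᴴ * L k = -(G + Gᴴ) := by
    rw [eq_neg_iff_add_eq_zero, add_comm]; exact hG
  have h1 : ∀ k, (L k * X - X * L k)ᴴ * (L k * X - X * L k) =
      (L k)ᴴ * (Xᴴ * X) * L k - Xᴴ * ((L k)ᴴ * X * L k) - ((L k)ᴴ * Xᴴ * L k) * X
        + Xᴴ * ((L k)ᴴ * L k) * X := by
    intro k
    simp only [conjTranspose_sub, conjTranspose_mul]
    noncomm_ring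
  simp only [h1, effDual_apply, Finset.sum_add_distrib, Finset.sum_sub_distrib, ← Finset.mul_sum,
    ← Finset.sum_mul, hG', Matrix.mul_add, Matrix.add_mul]
  noncomm_ring

/-- Elements of the kernel of the dual commute with everything (faithful case). -/
theorem effDual_comm {r : Type*} [Fintype r] [DecidableEq r] {m : ℕ}
    (G : Matrix r r ℂ) (L : Fin m → Matrix r r ℂ)
    (hG : G + Gᴴ + ∑ k, (L k)ᴴ * L k = 0) (S : Matrix r r ℂ) (hS : IsUnit S)
    (hfix : effGen G L (S * Sᴴ) = 0) (X : Matrix r r ℂ) (hX : effDual G L X = 0) :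
    (∀ k, L k * X = X * L k) ∧ G * X = X * G := by
  have hXs : effDual G L Xᴴ = 0 := by rw [effDual_star, hX, conjTranspose_zero]
  have h := diss_identity G L hG X
  rw [hX, hXs, Matrix.mul_zero, Matrix.zero_mul, sub_zero, sub_zero] at h
  have ht : ∑ k, (((L k * X - X * L k) * S)ᴴ * ((L k * X - X * L k) * S)).trace = 0 := by
    have h2 := effGen_trace G L (S * Sᴴ) (Xᴴ * X)
    rw [hfix, Matrix.zero_mul, trace_zero, ← h, Finset.mul_sum, trace_sum] at h2
    rw [h2]
    refine Finset.sum_congr rfl fun k _ => ?_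
    rw [conjTranspose_mul, trace_mul_comm (S * Sᴴ), Matrix.mul_assoc, trace_mul_comm Sᴴ]
    simp only [Matrix.mul_assoc]
  have hz : ∀ k, L k * X = X * L k := by
    intro k
    have := (Finset.sum_eq_zero_iff_of_nonneg
      (fun k _ => (posSemidef_conjTranspose_mul_self ((L k * X - X * L k) * S)).trace_nonneg)).1
      ht k (Finset.mem_univ k)
    rw [trace_conjTranspose_mul_self_eq_zero_iff] at this
    exact sub_eq_zero.1 ((hS.mul_left_eq_zero).1 this)
  refine ⟨hz, ?_⟩
  rw [effDual_apply] at hX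
  have h3 : ∑ k, (L k)ᴴ * X * L k = -(G + Gᴴ) * X := by
    have hG' : ∑ k, (L k)ᴴ * L k = -(G + Gᴴ) := by
      rw [eq_neg_iff_add_eq_zero, add_comm]; exact hG
    rw [← hG', Finset.sum_mul]
    refine Finset.sum_congr rfl fun k _ => ?_
    rw [Matrix.mul_assoc, Matrix.mul_assoc, hz]
  rw [h3] at hX
  have : X * G - G * X = 0 := by
    rw [← hX]; noncomm_ring
  exact (sub_eq_zero.1 this).symm

theorem effDual_gen_mul {r : Type*} [Fintype r] [DecidableEq r] {m : ℕ}
    (G : Matrix r r ℂ) (L : Fin m → Matrix r r ℂ)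
    (hG : G + Gᴴ + ∑ k, (L k)ᴴ * L k = 0) (S : Matrix r r ℂ) (hS : IsUnit S)
    (hfix : effGen G L (S * Sᴴ) = 0) (X : Matrix r r ℂ) (hX : effDual G L X = 0)
    (Y : Matrix r r ℂ) :
    effGen G L (X * Y) = X * effGen G L Y := by
  have hXs : effDual G L Xᴴ = 0 := by rw [effDual_star, hX, conjTranspose_zero]
  obtain ⟨h1, h2⟩ := effDual_comm G L hG S hS hfix X hX
  rw [effGen_apply, effGen_apply, Matrix.mul_add, Matrix.mul_add, ← Matrix.mul_assoc, h2,
    Finset.mul_sum]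
  simp only [← Matrix.mul_assoc, h1]

theorem effGen_ker_eq {r : Type*} [Fintype r] [DecidableEq r] {m : ℕ}
    (G : Matrix r r ℂ) (L : Fin m → Matrix r r ℂ)
    (hG : G + Gᴴ + ∑ k, (L k)ᴴ * L k = 0) (S : Matrix r r ℂ) (hS : IsUnit S)
    (hfix : effGen G L (S * Sᴴ) = 0) (Y : Matrix r r ℂ) (hY : effGen G L Y = 0) :
    ∃ a, effDual G L a = 0 ∧ Y = a * (S * Sᴴ) := by
  let R : Matrix r r ℂ →ₗ[ℂ] Matrix r r ℂ := LinearMap.mulRight ℂ (S * Sᴴ)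
  have hu : IsUnit (S * Sᴴ) := hS.mul ((isUnit_star).2 hS)
  have hR : Function.Injective R := by
    intro a b hab
    exact hu.mul_left_injective hab
  have hle : (LinearMap.ker (effDual G L)).map R ≤ LinearMap.ker (effGen G L) := by
    rintro _ ⟨a, ha, rfl⟩
    have ha' : effDual G L a = 0 := ha
    show effGen G L (a * (S * Sᴴ)) = 0
    rw [effDual_gen_mul G L hG S hS hfix a ha', hfix, Matrix.mul_zero]
  have heq := Submodule.eq_of_le_of_finrank_eq hle (by
    rw [finrank_map_inj R hR, effDual_ker_finrank])
  have hm : Y ∈ (LinearMap.ker (effDual G L)).map R := by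
    rw [heq]; exact hY
  obtain ⟨a, ha, rfl⟩ := hm
  exact ⟨a, ha, rfl⟩

/-- Real diagonal matrix. -/
noncomputable def rdiag {r : Type*} [DecidableEq r] (d : r → ℝ) : Matrix r r ℂ :=
  Matrix.diagonal fun i => (d i : ℂ)

theorem rdiag_mul {r : Type*} [Fintype r] [DecidableEq r] (d e : r → ℝ) :
    rdiag d * rdiag e = rdiag (fun i => d i * e i) := by
  simp [rdiag, Matrix.diagonal_mul_diagonal]

theorem rdiag_star {r : Type*} [DecidableEq r] (d : r → ℝ) :
    (rdiag d)ᴴ = rdiag d := by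
  rw [rdiag, Matrix.diagonal_conjTranspose]
  congr 1
  ext i
  simp

theorem rdiag_inv {r : Type*} [Fintype r] [DecidableEq r] (d : r → ℝ) (hd : ∀ i, 0 < d i) :
    rdiag d * rdiag (fun i => (d i)⁻¹) = 1 := by
  rw [rdiag_mul, rdiag, ← Matrix.diagonal_one]
  congr 1
  ext i
  rw [mul_inv_cancel₀ (hd i).ne']
  simp

theorem rdiag_inv' {r : Type*} [Fintype r] [DecidableEq r] (d : r → ℝ) (hd : ∀ i, 0 < d i) :
    rdiag (fun i => (d i)⁻¹) * rdiag d = 1 := by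
  rw [← rdiag_inv d hd, rdiag_mul, rdiag_mul]
  simp only [mul_comm]

theorem modular_half {r : Type*} [Fintype r] [DecidableEq r] (d : r → ℝ) (hd : ∀ i, 0 < d i)
    (K : Submodule ℂ (Matrix r r ℂ))
    (hK : ∀ Y ∈ K, rdiag d * Y * rdiag (fun i => (d i)⁻¹) ∈ K) :
    ∀ Y ∈ K, rdiag (fun i => √(d i)) * Y * rdiag (fun i => (√(d i))⁻¹) ∈ K := by
  classical
  let T : Module.End ℂ (Matrix r r ℂ) :=
    (LinearMap.mulRight ℂ (rdiag (fun i => (d i)⁻¹))).comp (LinearMap.mulLeft ℂ (rdiag d))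
  have hT : ∀ Y, T Y = rdiag d * Y * rdiag (fun i => (d i)⁻¹) := fun _ => rfl
  have hTe : ∀ Y i j, T Y i j = ((d i / d j : ℝ) : ℂ) * Y i j := by
    intro Y i j
    rw [hT, rdiag, rdiag, Matrix.mul_diagonal, Matrix.diagonal_mul]
    push_cast
    ring
  have hTn : ∀ (n : ℕ) Y i j, (T ^ n) Y i j = ((d i / d j : ℝ) : ℂ) ^ n * Y i j := by
    intro n
    induction n with
    | zero => intro Y i j; simp
    | succ n ih =>
      intro Y i j
      rw [pow_succ', Module.End.mul_apply, hTe, ih]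
      ring
  have hp : ∀ (p : Polynomial ℂ) Y i j,
      (Polynomial.aeval T p) Y i j = p.eval ((d i / d j : ℝ) : ℂ) * Y i j := by
    intro p Y i j
    induction p using Polynomial.induction_on' with
    | add p q hp hq =>
      rw [map_add, LinearMap.add_apply, Matrix.add_apply, hp, hq, Polynomial.eval_add]
      ring
    | monomial n a =>
      rw [Polynomial.aeval_monomial, Module.End.mul_apply, Module.algebraMap_end_apply,
        Matrix.smul_apply, hTn, Polynomial.eval_monomial, smul_eq_mul]
      ring
  have hpK : ∀ (p : Polynomial ℂ), ∀ Y ∈ K, (Polynomial.aeval T p) Y ∈ K := by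
    intro p Y hY
    induction p using Polynomial.induction_on' with
    | add p q hp hq =>
      rw [map_add, LinearMap.add_apply]
      exact K.add_mem hp hq
    | monomial n a =>
      rw [Polynomial.aeval_monomial, Module.End.mul_apply, Module.algebraMap_end_apply]
      refine K.smul_mem _ ?_
      induction n with
      | zero => simpa using hY
      | succ n ih =>
        rw [pow_succ', Module.End.mul_apply]
        exact hK _ ih
  intro Y hY
  let s : Finset ℂ := Finset.univ.image fun q : r × r => ((d q.1 / d q.2 : ℝ) : ℂ)
  let p : Polynomial ℂ := Lagrange.interpolate s id (fun x => ((√(x.re) : ℝ) : ℂ))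
  have hpe : ∀ i j, p.eval ((d i / d j : ℝ) : ℂ) = ((√(d i / d j) : ℝ) : ℂ) := by
    intro i j
    have := Lagrange.eval_interpolate_at_node (s := s) (v := id)
      (fun x : ℂ => ((√(x.re) : ℝ) : ℂ)) (Set.injOn_id _)
      (i := ((d i / d j : ℝ) : ℂ)) (Finset.mem_image.2 ⟨(i, j), Finset.mem_univ _, rfl⟩)
    simpa only [id, Complex.ofReal_re] using this
  convert hpK p Y hY using 1
  ext i j
  rw [hp, hpe, rdiag, rdiag, Matrix.mul_diagonal, Matrix.diagonal_mul,
    Real.sqrt_div (hd i).le]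
  push_cast
  ring

theorem exists_compression {α : Type*} [Fintype α] [DecidableEq α] (σ : Matrix α α ℂ)
    (hσ : σ.PosSemidef) : ∃ (q : α → Prop) (_ : DecidablePred q)
      (d : {i // q i} → ℝ) (V : Matrix α {i // q i} ℂ),
      (∀ i, 0 < d i) ∧ Vᴴ * V = 1 ∧ σ = V * rdiag d * Vᴴ := by
  classical
  let ev := hσ.1.eigenvalues
  let U : Matrix α α ℂ := hσ.1.eigenvectorUnitary
  have hU : star U * U = 1 := Unitary.coe_star_mul_self hσ.1.eigenvectorUnitary
  have hspec : σ = U * Matrix.diagonal (fun i => (ev i : ℂ)) * star U := by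
    have := hσ.1.spectral_theorem
    rw [Unitary.conjStarAlgAut_apply] at this
    exact this
  refine ⟨fun i => ev i ≠ 0, inferInstance, fun i => ev i, U.submatrix id Subtype.val, ?_, ?_, ?_⟩
  · intro i
    exact lt_of_le_of_ne (hσ.eigenvalues_nonneg i) (Ne.symm i.2)
  · ext i j
    have := congrFun (congrFun hU i) j
    rw [Matrix.one_apply] at this ⊢
    simp only [Subtype.ext_iff]
    rw [← this]
    simp [Matrix.mul_apply]
  · ext i j
    conv_lhs => rw [hspec]
    rw [Matrix.mul_apply, Matrix.mul_apply]
    simp only [rdiag, Matrix.mul_diagonal, Matrix.submatrix_apply, id,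
      Matrix.conjTranspose_apply, Matrix.star_apply]
    have key : ∀ f : α → ℂ, (∀ x, ev x = 0 → f x = 0) →
        ∑ x, f x = ∑ x : {i // ev i ≠ 0}, f x := by
      intro f hf
      rw [← Finset.sum_filter_of_ne (p := fun x => ev x ≠ 0)
        (fun x _ hx h0 => hx (hf x h0))]
      exact Finset.sum_subtype _ (by simp) f
    exact key (fun x => U i x * (ev x : ℂ) * star (U j x)) (by intro x hx; simp [hx])

theorem mpinv_eq_s6 {ι : Type*} [Fintype ι] [DecidableEq ι] (A B : Matrix ι ι ℂ)
    (h1 : A * B * A = A) (h2 : B * A * B = B) (h3 : (A * B)ᴴ = A * B) (h4 : (B * A)ᴴ = B * A) :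
    mpinv A = B := by
  have hex : ∃ B : Matrix ι ι ℂ,
      A * B * A = A ∧ B * A * B = B ∧ (A * B)ᴴ = A * B ∧ (B * A)ᴴ = B * A := ⟨B, h1, h2, h3, h4⟩
  rw [mpinv, dif_pos hex]
  obtain ⟨g1, g2, g3, g4⟩ := hex.choose_spec
  generalize hex.choose = C at *
  have e1 : A * C = A * B := by
    have : (A * B * (A * C))ᴴ = (A * C)ᴴ := by rw [← Matrix.mul_assoc, h1]
    rw [conjTranspose_mul, g3, h3, ← Matrix.mul_assoc, g1] at this
    exact this.symm
  have e2 : C * A = B * A := by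
    have : ((C * A) * (B * A))ᴴ = (C * A)ᴴ := by
      rw [Matrix.mul_assoc, ← Matrix.mul_assoc A, h1]
    rw [conjTranspose_mul, g4, h4, Matrix.mul_assoc, ← Matrix.mul_assoc A, g1] at this
    exact this.symm
  rw [← g2, e2, Matrix.mul_assoc, e1, ← Matrix.mul_assoc, h2]

open scoped MatrixOrder in
theorem msqrt_eq {ι : Type*} [Fintype ι] [DecidableEq ι] (A B : Matrix ι ι ℂ)
    (h1 : B.PosSemidef) (h2 : B * B = A) : msqrt A = B := by
  have hex : ∃ B : Matrix ι ι ℂ, B.PosSemidef ∧ B * B = A := ⟨B, h1, h2⟩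
  rw [msqrt, dif_pos hex]
  obtain ⟨g1, g2⟩ := hex.choose_spec
  generalize hex.choose = C at *
  rw [← CFC.sqrt_unique g2 (Matrix.nonneg_iff_posSemidef.2 g1),
    ← CFC.sqrt_unique h2 (Matrix.nonneg_iff_posSemidef.2 h1)]

theorem mpinv_comp {α r : Type*} [Fintype α] [DecidableEq α] [Fintype r] [DecidableEq r]
    (V : Matrix α r ℂ) (hV : Vᴴ * V = 1) (d : r → ℝ) (hd : ∀ i, 0 < d i) :
    mpinv (V * rdiag d * Vᴴ) = V * rdiag (fun i => (d i)⁻¹) * Vᴴ := by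
  have hc : ∀ X Y : Matrix r r ℂ, (V * X * Vᴴ) * (V * Y * Vᴴ) = V * (X * Y) * Vᴴ := by
    intro X Y
    calc _ = V * X * (Vᴴ * V) * Y * Vᴴ := by simp only [Matrix.mul_assoc]
      _ = _ := by rw [hV]; simp only [Matrix.mul_assoc, Matrix.one_mul]
  refine mpinv_eq_s6 _ _ ?_ ?_ ?_ ?_
  · rw [hc, hc, rdiag_inv d hd, Matrix.one_mul]
  · rw [hc, hc, rdiag_inv' d hd, Matrix.one_mul]
  · rw [hc, rdiag_inv d hd, Matrix.mul_one, conjTranspose_mul, conjTranspose_conjTranspose]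
  · rw [hc, rdiag_inv' d hd, Matrix.mul_one, conjTranspose_mul, conjTranspose_conjTranspose]

theorem msqrt_comp {α r : Type*} [Fintype α] [DecidableEq α] [Fintype r] [DecidableEq r]
    (V : Matrix α r ℂ) (hV : Vᴴ * V = 1) (d : r → ℝ) (hd : ∀ i, 0 < d i) :
    msqrt (V * rdiag d * Vᴴ) = V * rdiag (fun i => √(d i)) * Vᴴ := by
  refine msqrt_eq _ _ ?_ ?_
  · refine Matrix.PosSemidef.mul_mul_conjTranspose_same ?_ V
    refine Matrix.PosSemidef.diagonal ?_
    intro i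
    simp only [Pi.zero_apply]
    exact_mod_cast Real.sqrt_nonneg _
  · calc _ = V * rdiag (fun i => √(d i)) * (Vᴴ * V) * rdiag (fun i => √(d i)) * Vᴴ := by
          simp only [Matrix.mul_assoc]
      _ = _ := by
          rw [hV, Matrix.mul_one, Matrix.mul_assoc V, rdiag_mul]
          simp only [Real.mul_self_sqrt (hd _).le]

theorem posSemidef_sandwich_zero {a b : Type*} [Fintype a] [Fintype b] [DecidableEq b]
    (d : b → ℝ) (hd : ∀ i, 0 < d i) (M : Matrix a b ℂ)
    (h : (M * rdiag d * Mᴴ).trace = 0) : M = 0 := by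
  have hs : rdiag d = rdiag (fun i => √(d i)) * (rdiag (fun i => √(d i)))ᴴ := by
    rw [rdiag_star, rdiag_mul]
    simp only [Real.mul_self_sqrt (hd _).le]
  have h2 : M * rdiag d * Mᴴ = (M * rdiag (fun i => √(d i))) * (M * rdiag (fun i => √(d i)))ᴴ := by
    rw [hs, conjTranspose_mul]
    simp only [Matrix.mul_assoc]
  rw [h2, trace_mul_conjTranspose_self_eq_zero_iff] at h
  have h3 := congrArg (fun X => X * rdiag (fun i => (√(d i))⁻¹)) h
  simp only [Matrix.zero_mul] at h3
  rwa [Matrix.mul_assoc, rdiag_inv _ (fun i => Real.sqrt_pos.2 (hd i)), Matrix.mul_one] at h3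

theorem rdiag_posSemidef {b : Type*} [Fintype b] [DecidableEq b]
    (d : b → ℝ) (hd : ∀ i, 0 < d i) : (rdiag d).PosSemidef := by
  refine Matrix.PosSemidef.diagonal ?_
  intro i
  simp only [Pi.zero_apply]
  exact_mod_cast (hd i).le

/-- Invariance of the support of a stationary state. -/
theorem support_invariant {α r : Type*} [Fintype α] [DecidableEq α] [Fintype r] [DecidableEq r]
    {m : ℕ} (G : Matrix α α ℂ) (L : Fin m → Matrix α α ℂ)
    (V : Matrix α r ℂ) (hV : Vᴴ * V = 1) (d : r → ℝ) (hd : ∀ i, 0 < d i)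
    (hfix : effGen G L (V * rdiag d * Vᴴ) = 0) :
    (∀ k, V * (Vᴴ * L k * V) = L k * V) ∧ V * (Vᴴ * G * V) = G * V := by
  set Q : Matrix α α ℂ := 1 - V * Vᴴ with hQ
  have hQV : Q * V = 0 := by
    rw [hQ, Matrix.sub_mul, Matrix.mul_assoc, hV, Matrix.one_mul, Matrix.mul_one, sub_self]
  have hQs : Qᴴ = Q := by
    rw [hQ, conjTranspose_sub, conjTranspose_mul, conjTranspose_conjTranspose, conjTranspose_one]
  have hVQ : Vᴴ * Q = 0 := by
    have := congrArg conjTranspose hQV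
    rwa [conjTranspose_mul, hQs, conjTranspose_zero] at this
  have hconv : ∀ M : Matrix α α ℂ, Q * M * V = 0 → V * (Vᴴ * M * V) = M * V := by
    intro M hM
    rw [hQ, Matrix.sub_mul, Matrix.sub_mul, Matrix.one_mul, sub_eq_zero] at hM
    rw [hM]
    simp only [Matrix.mul_assoc]
  rw [effGen_apply] at hfix
  have hL : ∀ k, Q * L k * V = 0 := by
    have h1 : ∑ k, ((Q * L k * V) * rdiag d * (Q * L k * V)ᴴ).trace = 0 := by
      have h2 := congrArg (fun X => Q * X * Q) hfix
      simp only [Matrix.mul_add, Matrix.add_mul, Matrix.mul_zero, Matrix.zero_mul] at h2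
      have e1 : Q * (G * (V * rdiag d * Vᴴ)) * Q = 0 := by
        calc _ = Q * G * V * rdiag d * (Vᴴ * Q) := by simp only [Matrix.mul_assoc]
          _ = 0 := by rw [hVQ, Matrix.mul_zero]
      have e2 : Q * ((V * rdiag d * Vᴴ) * Gᴴ) * Q = 0 := by
        calc _ = (Q * V) * rdiag d * Vᴴ * Gᴴ * Q := by simp only [Matrix.mul_assoc]
          _ = 0 := by rw [hQV]; simp only [Matrix.zero_mul]
      rw [e1, e2, zero_add, zero_add, Finset.mul_sum, Finset.sum_mul] at h2
      rw [← trace_sum, ← trace_zero (n := α) (R := ℂ), ← h2]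
      congr 1
      refine Finset.sum_congr rfl fun k _ => ?_
      simp only [conjTranspose_mul, hQs, Matrix.mul_assoc]
    intro k
    have := (Finset.sum_eq_zero_iff_of_nonneg
      (fun k _ => ((rdiag_posSemidef d hd).mul_mul_conjTranspose_same
        (Q * L k * V)).trace_nonneg)).1 h1 k (Finset.mem_univ k)
    exact posSemidef_sandwich_zero d hd _ this
  refine ⟨fun k => hconv _ (hL k), hconv _ ?_⟩
  have h2 := congrArg (fun X => Q * X * (V * rdiag (fun i => (d i)⁻¹))) hfix
  simp only [Matrix.mul_add, Matrix.add_mul, Matrix.mul_zero, Matrix.zero_mul] at h2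
  have e1 : Q * (G * (V * rdiag d * Vᴴ)) * (V * rdiag (fun i => (d i)⁻¹)) = Q * G * V := by
    calc _ = Q * G * V * (rdiag d * (Vᴴ * V) * rdiag (fun i => (d i)⁻¹)) := by
            simp only [Matrix.mul_assoc]
      _ = _ := by rw [hV, Matrix.mul_one, rdiag_inv d hd, Matrix.mul_one]
  have e2 : Q * ((V * rdiag d * Vᴴ) * Gᴴ) * (V * rdiag (fun i => (d i)⁻¹)) = 0 := by
    calc _ = (Q * V) * rdiag d * Vᴴ * Gᴴ * (V * rdiag (fun i => (d i)⁻¹)) := by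
            simp only [Matrix.mul_assoc]
      _ = 0 := by rw [hQV]; simp only [Matrix.zero_mul]
  have e3 : Q * (∑ k, L k * (V * rdiag d * Vᴴ) * (L k)ᴴ) = 0 := by
    rw [Finset.mul_sum]
    refine Finset.sum_eq_zero fun k _ => ?_
    calc _ = (Q * L k * V) * rdiag d * Vᴴ * (L k)ᴴ := by simp only [Matrix.mul_assoc]
      _ = 0 := by rw [hL]; simp only [Matrix.zero_mul]
  rwa [e1, e2, e3, Matrix.zero_mul, add_zero, add_zero] at h2

/-- Intertwining with the compressed generator. -/
theorem effGen_intertwine {α r : Type*} [Fintype α] [Fintype r]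
    {m : ℕ} (G : Matrix α α ℂ) (L : Fin m → Matrix α α ℂ)
    (V : Matrix α r ℂ) (hL : ∀ k, V * (Vᴴ * L k * V) = L k * V) (hG : V * (Vᴴ * G * V) = G * V)
    (Y : Matrix r r ℂ) :
    effGen G L (V * Y * Vᴴ) =
      V * effGen (Vᴴ * G * V) (fun k => Vᴴ * L k * V) Y * Vᴴ := by
  have hs : ∀ M : Matrix α α ℂ, V * (Vᴴ * M * V) = M * V →
      (Vᴴ * M * V)ᴴ * Vᴴ = Vᴴ * Mᴴ := by
    intro M hM
    rw [← conjTranspose_mul, hM, conjTranspose_mul]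
  rw [effGen_apply, effGen_apply, Matrix.mul_add, Matrix.mul_add, Matrix.add_mul, Matrix.add_mul,
    Matrix.mul_sum, Matrix.sum_mul]
  congr 1
  · congr 1
    · rw [← Matrix.mul_assoc, ← Matrix.mul_assoc, ← hG, Matrix.mul_assoc V (Vᴴ * G * V) Y]
    · rw [Matrix.mul_assoc V (Y * _), Matrix.mul_assoc Y, hs G hG]
      simp only [Matrix.mul_assoc]
  · refine Finset.sum_congr rfl fun k _ => ?_
    calc _ = (L k * V) * Y * (Vᴴ * (L k)ᴴ) := by simp only [Matrix.mul_assoc]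
      _ = _ := by
        rw [← hs _ (hL k), ← hL k]
        simp only [Matrix.mul_assoc]

/-- The single-system core: every element of the distorted algebra is stationary. -/
theorem core {α : Type*} [Fintype α] [DecidableEq α]
    {m : ℕ} (G : Matrix α α ℂ) (L : Fin m → Matrix α α ℂ)
    (hG : G + Gᴴ + ∑ k, (L k)ᴴ * L k = 0) (σ : Matrix α α ℂ) (hσ : σ.PosSemidef)
    (hfix : effGen G L σ = 0) (W : Set (Matrix α α ℂ)) (hW : ∀ X ∈ W, effGen G L X = 0)
    (hsupp : ∀ Q : Matrix α α ℂ, Qᴴ = Q → Q * σ = 0 → ∀ X ∈ W, Q * X = 0 ∧ X * Q = 0) :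
    ∀ A ∈ Fdist σ W, effGen G L A = 0 := by
  obtain ⟨q, _, d, V, hd, hV, rfl⟩ := exists_compression σ hσ
  obtain ⟨hL, hGV⟩ := support_invariant G L V hV d hd hfix
  have hint := effGen_intertwine G L V hL hGV
  set G' := Vᴴ * G * V with hG'
  set L' := fun k => Vᴴ * L k * V with hL'
  have hcanc : ∀ Y : Matrix {i // q i} {i // q i} ℂ, V * Y * Vᴴ = 0 → Y = 0 := by
    intro Y hY
    have := congrArg (fun X => Vᴴ * X * V) hY
    simp only [Matrix.mul_zero, Matrix.zero_mul] at this
    rw [← this]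
    calc Y = (Vᴴ * V) * Y * (Vᴴ * V) := by rw [hV, Matrix.one_mul, Matrix.mul_one]
      _ = _ := by simp only [Matrix.mul_assoc]
  have hker : ∀ Y : Matrix {i // q i} {i // q i} ℂ, effGen G L (V * Y * Vᴴ) = 0 ↔ effGen G' L' Y = 0 := by
    intro Y
    rw [hint]
    constructor
    · exact hcanc _
    · intro h; rw [h, Matrix.mul_zero, Matrix.zero_mul]
  have hGn : G' + G'ᴴ + ∑ k, (L' k)ᴴ * L' k = 0 := by
    have h1 := congrArg (fun X => Vᴴ * X * V) hG
    simp only [Matrix.mul_zero, Matrix.zero_mul, Matrix.mul_add, Matrix.add_mul, Matrix.mul_sum,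
      Matrix.sum_mul] at h1
    rw [← h1]
    congr 1
    · congr 1
      rw [hG', conjTranspose_mul, conjTranspose_mul, conjTranspose_conjTranspose, Matrix.mul_assoc]
    · refine Finset.sum_congr rfl fun k _ => ?_
      simp only [hL']
      rw [conjTranspose_mul, conjTranspose_mul, conjTranspose_conjTranspose]
      calc _ = Vᴴ * (L k)ᴴ * (V * (Vᴴ * L k * V)) := by simp only [Matrix.mul_assoc]
        _ = _ := by rw [hL k]; simp only [Matrix.mul_assoc]
  let S := rdiag fun i => √(d i)
  have hSS : S * Sᴴ = rdiag d := by
    simp only [S]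
    rw [rdiag_star, rdiag_mul]
    simp only [Real.mul_self_sqrt (hd _).le]
  have hSu : IsUnit S :=
    IsUnit.of_mul_eq_one _ (rdiag_inv _ (fun i => Real.sqrt_pos.2 (hd i)))
  have hSfix : effGen G' L' (S * Sᴴ) = 0 := by rw [hSS]; exact (hker _).1 hfix
  -- structure of the kernel
  have hstr := effGen_ker_eq G' L' hGn S hSu hSfix
  have hmul := effDual_gen_mul G' L' hGn S hSu hSfix
  rw [hSS] at hstr
  have hprod : ∀ Y Z, effGen G' L' Y = 0 → effGen G' L' Z = 0 →
      effGen G' L' (Y * rdiag (fun i => (d i)⁻¹) * Z) = 0 := by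
    intro Y Z hY hZ
    obtain ⟨a, ha, rfl⟩ := hstr Y hY
    rw [Matrix.mul_assoc a, rdiag_inv d hd, Matrix.mul_one, hmul a ha, hZ, Matrix.mul_zero]
  have hmod : ∀ Y ∈ LinearMap.ker (effGen G' L'),
      rdiag d * Y * rdiag (fun i => (d i)⁻¹) ∈ LinearMap.ker (effGen G' L') := by
    intro Y hY
    obtain ⟨a, ha, rfl⟩ := hstr Y hY
    rw [LinearMap.mem_ker, Matrix.mul_assoc, Matrix.mul_assoc a, rdiag_inv d hd, Matrix.mul_one]
    have ha' : effDual G' L' aᴴ = 0 := by rw [effDual_star, ha, conjTranspose_zero]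
    have h1 := hmul aᴴ ha' (rdiag d)
    rw [← hSS, hSfix, Matrix.mul_zero, hSS, ← rdiag_star d, ← conjTranspose_mul, effGen_star,
      conjTranspose_eq_zero] at h1
    exact h1
  have hhalf := modular_half d hd _ hmod
  let Θ : Matrix {i // q i} {i // q i} ℂ →ₗ[ℂ] Matrix α α ℂ :=
    { toFun := fun Y => V * Y * Vᴴ
      map_add' := by intros; rw [Matrix.mul_add, Matrix.add_mul]
      map_smul' := by intros; rw [Matrix.mul_smul, Matrix.smul_mul, RingHom.id_apply] }
  have hΘ : ∀ Y, Θ Y = V * Y * Vᴴ := fun _ => rfl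
  have hc : ∀ X Y : Matrix {i // q i} {i // q i} ℂ, Θ X * Θ Y = Θ (X * Y) := by
    intro X Y
    simp only [hΘ]
    calc _ = V * X * (Vᴴ * V) * Y * Vᴴ := by simp only [Matrix.mul_assoc]
      _ = _ := by rw [hV]; simp only [Matrix.mul_assoc, Matrix.one_mul]
  have hle : Fdist (V * rdiag d * Vᴴ) W ≤ (LinearMap.ker (effGen G' L')).map Θ := by
    refine sInf_le ⟨?_, ?_, ?_, ?_⟩
    · intro X hX
      have hQ := hsupp (1 - V * Vᴴ) (by
        rw [conjTranspose_sub, conjTranspose_mul, conjTranspose_conjTranspose, conjTranspose_one])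
        (by
          rw [Matrix.sub_mul, Matrix.one_mul, sub_eq_zero]
          calc _ = V * (Vᴴ * V) * rdiag d * Vᴴ := by rw [hV, Matrix.mul_one]
            _ = _ := by simp only [Matrix.mul_assoc]) X hX
      rw [Matrix.sub_mul, Matrix.mul_sub, Matrix.one_mul, Matrix.mul_one, sub_eq_zero,
        sub_eq_zero] at hQ
      have hXe : X = V * (Vᴴ * X * V) * Vᴴ := by
        calc X = X * (V * Vᴴ) := hQ.2
          _ = (V * Vᴴ * X) * (V * Vᴴ) := by rw [← hQ.1]
          _ = _ := by simp only [Matrix.mul_assoc]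
      refine ⟨Vᴴ * X * V, ?_, hXe.symm⟩
      show effGen G' L' _ = 0
      rw [← hker, ← hXe]
      exact hW X hX
    · rintro _ ⟨Y, hY, rfl⟩
      refine ⟨Yᴴ, ?_, ?_⟩
      · show effGen G' L' _ = 0
        rw [effGen_star, show effGen G' L' Y = 0 from hY, conjTranspose_zero]
      · rw [hΘ, hΘ, conjTranspose_mul, conjTranspose_mul, conjTranspose_conjTranspose,
          Matrix.mul_assoc]
    · rintro _ ⟨Y, hY, rfl⟩ _ ⟨Z, hZ, rfl⟩
      rw [mpinv_comp V hV d hd, ← hΘ, hc, hc]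
      exact ⟨_, hprod Y Z hY hZ, rfl⟩
    · rintro _ ⟨Y, hY, rfl⟩
      rw [msqrt_comp V hV d hd, mpinv_comp V hV _ (fun i => Real.sqrt_pos.2 (hd i)), ← hΘ, ← hΘ,
        hc, hc]
      exact ⟨_, hhalf Y hY, rfl⟩
  intro A hA
  obtain ⟨Y, hY, rfl⟩ := hle hA
  exact (hker Y).2 hY

/-- Effective non-Hermitian generator. -/
noncomputable def effG {r : Type*} [Fintype r] {m : ℕ}
    (H : Matrix r r ℂ) (L : Fin m → Matrix r r ℂ) : Matrix r r ℂ :=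
  (-Complex.I) • H - ((1 : ℂ) / 2) • ∑ k, (L k)ᴴ * L k

theorem effG_star {r : Type*} [Fintype r] {m : ℕ}
    (H : Matrix r r ℂ) (hH : H.IsHermitian) (L : Fin m → Matrix r r ℂ) :
    (effG H L)ᴴ = Complex.I • H - ((1 : ℂ) / 2) • ∑ k, (L k)ᴴ * L k := by
  simp [effG, conjTranspose_sub, conjTranspose_smul, conjTranspose_sum, hH.eq]

theorem effG_cond {r : Type*} [Fintype r] {m : ℕ}
    (H : Matrix r r ℂ) (hH : H.IsHermitian) (L : Fin m → Matrix r r ℂ) :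
    effG H L + (effG H L)ᴴ + ∑ k, (L k)ᴴ * L k = 0 := by
  rw [effG_star H hH, effG]
  module

theorem lindblad_eq {r : Type*} [Fintype r] [DecidableEq r] {m : ℕ}
    (H : Matrix r r ℂ) (hH : H.IsHermitian) (L : Fin m → Matrix r r ℂ) (X : Matrix r r ℂ) :
    lindbladMap H L X = effGen (effG H L) L X := by
  rw [effGen_apply, effG_star H hH, effG, lindbladMap]
  simp only [LinearMap.add_apply, LinearMap.smul_apply, LinearMap.sub_apply, LinearMap.sum_apply,
    LinearMap.comp_apply, LinearMap.mulLeft_apply, LinearMap.mulRight_apply,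
    Finset.sum_sub_distrib, ← Finset.smul_sum, Finset.sum_add_distrib, Matrix.sub_mul,
    Matrix.mul_sub, Matrix.smul_mul, Matrix.mul_smul, ← Finset.sum_mul, ← Finset.mul_sum]
  module

theorem kron_isHermitian {α β : Type*} [DecidableEq β] (H : Matrix α α ℂ) (hH : H.IsHermitian) :
    (Matrix.kroneckerMap (· * ·) H (1 : Matrix β β ℂ)).IsHermitian := by
  rw [Matrix.IsHermitian]
  erw [Matrix.conjTranspose_kronecker]
  rw [hH.eq, conjTranspose_one]

section Bip

variable {α β : Type*} [Fintype α] [Fintype β] [DecidableEq α] [DecidableEq β]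

theorem kmul (A C : Matrix α α ℂ) (B D : Matrix β β ℂ) :
    Matrix.kroneckerMap (· * ·) A B * Matrix.kroneckerMap (· * ·) C D =
      Matrix.kroneckerMap (· * ·) (A * C) (B * D) :=
  (Matrix.mul_kronecker_mul A C B D).symm

theorem kstar (A : Matrix α α ℂ) :
    (Matrix.kroneckerMap (· * ·) A (1 : Matrix β β ℂ))ᴴ =
      Matrix.kroneckerMap (· * ·) Aᴴ (1 : Matrix β β ℂ) := by
  have := Matrix.conjTranspose_kronecker A (1 : Matrix β β ℂ)
  rw [conjTranspose_one] at this
  exact this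

/-- Tensoring with a fixed operator, as a linear map. -/
def kronLin (B : Matrix β β ℂ) : Matrix α α ℂ →ₗ[ℂ] Matrix (α × β) (α × β) ℂ where
  toFun A := Matrix.kroneckerMap (· * ·) A B
  map_add' X Y := by ext ⟨i, j⟩ ⟨k, l⟩; simp [add_mul]
  map_smul' c X := by ext ⟨i, j⟩ ⟨k, l⟩; simp [mul_assoc]

theorem kronLin_apply (B : Matrix β β ℂ) (A : Matrix α α ℂ) :
    kronLin B A = Matrix.kroneckerMap (· * ·) A B := rfl

/-- Partial trace as a linear map. -/
noncomputable def ptLin : Matrix (α × β) (α × β) ℂ →ₗ[ℂ] Matrix α α ℂ where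
  toFun := ptraceB
  map_add' X Y := by ext i j; simp [ptraceB, Finset.sum_add_distrib]
  map_smul' c X := by ext i j; simp [ptraceB, Finset.mul_sum]

theorem ptraceB_left (A : Matrix α α ℂ) (X : Matrix (α × β) (α × β) ℂ) :
    ptraceB (Matrix.kroneckerMap (· * ·) A (1 : Matrix β β ℂ) * X) = A * ptraceB X := by
  ext i j
  simp only [ptraceB, Matrix.of_apply, Matrix.mul_apply, Fintype.sum_prod_type,
    Matrix.kroneckerMap_apply, Matrix.one_apply, mul_ite, mul_one, mul_zero, ite_mul, zero_mul,
    Finset.sum_ite_eq, Finset.mem_univ, if_true, Finset.mul_sum]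
  rw [Finset.sum_comm]

theorem ptraceB_right (A : Matrix α α ℂ) (X : Matrix (α × β) (α × β) ℂ) :
    ptraceB (X * Matrix.kroneckerMap (· * ·) A (1 : Matrix β β ℂ)) = ptraceB X * A := by
  ext i j
  simp only [ptraceB, Matrix.of_apply, Matrix.mul_apply, Fintype.sum_prod_type,
    Matrix.kroneckerMap_apply, Matrix.one_apply, mul_ite, mul_one, mul_zero,
    Finset.sum_ite_eq', Finset.mem_univ, if_true, Finset.sum_mul]
  rw [Finset.sum_comm]

theorem ptraceB_trace (X : Matrix (α × β) (α × β) ℂ) : (ptraceB X).trace = X.trace := by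
  simp [ptraceB, Matrix.trace, Fintype.sum_prod_type]

theorem ptraceB_posSemidef (ρ : Matrix (α × β) (α × β) ℂ) (hρ : ρ.PosSemidef) :
    (ptraceB ρ).PosSemidef := by
  have : ptraceB ρ = ∑ k : β, ρ.submatrix (fun i => (i, k)) (fun i => (i, k)) := by
    ext i j
    simp [ptraceB, Matrix.sum_apply]
  rw [this]
  exact Matrix.posSemidef_sum _ fun k _ => hρ.submatrix _

theorem effG_kron {m : ℕ} (H : Matrix α α ℂ) (L : Fin m → Matrix α α ℂ) :
    effG (Matrix.kroneckerMap (· * ·) H (1 : Matrix β β ℂ))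
      (fun k => Matrix.kroneckerMap (· * ·) (L k) (1 : Matrix β β ℂ)) =
      Matrix.kroneckerMap (· * ·) (effG H L) (1 : Matrix β β ℂ) := by
  simp only [effG, kstar, kmul, Matrix.mul_one]
  simp only [← kronLin_apply, map_sub, map_smul, map_sum]

theorem effGen_kron {m : ℕ} (G : Matrix α α ℂ) (L : Fin m → Matrix α α ℂ) (A : Matrix α α ℂ)
    (B : Matrix β β ℂ) :
    effGen (Matrix.kroneckerMap (· * ·) G (1 : Matrix β β ℂ))
      (fun k => Matrix.kroneckerMap (· * ·) (L k) (1 : Matrix β β ℂ))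
      (Matrix.kroneckerMap (· * ·) A B) =
      Matrix.kroneckerMap (· * ·) (effGen G L A) B := by
  simp only [effGen_apply, kstar, kmul, Matrix.mul_one, Matrix.one_mul]
  simp only [← kronLin_apply, map_add, map_sum]

theorem effGen_ptrace {m : ℕ} (G : Matrix α α ℂ) (L : Fin m → Matrix α α ℂ)
    (B : Matrix β β ℂ) (X : Matrix (α × β) (α × β) ℂ) :
    effGen G L (ptraceB (Matrix.kroneckerMap (· * ·) (1 : Matrix α α ℂ) B * X)) =
      ptraceB (Matrix.kroneckerMap (· * ·) (1 : Matrix α α ℂ) B *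
        effGen (Matrix.kroneckerMap (· * ·) G (1 : Matrix β β ℂ))
          (fun k => Matrix.kroneckerMap (· * ·) (L k) (1 : Matrix β β ℂ)) X) := by
  have hcomm : ∀ (A : Matrix α α ℂ) (Y : Matrix (α × β) (α × β) ℂ),
      Matrix.kroneckerMap (· * ·) (1 : Matrix α α ℂ) B *
        (Matrix.kroneckerMap (· * ·) A (1 : Matrix β β ℂ) * Y) =
      Matrix.kroneckerMap (· * ·) A (1 : Matrix β β ℂ) *
        (Matrix.kroneckerMap (· * ·) (1 : Matrix α α ℂ) B * Y) := by
    intro A Y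
    rw [← Matrix.mul_assoc, ← Matrix.mul_assoc, kmul, kmul]
    simp only [Matrix.one_mul, Matrix.mul_one]
  have hadd : ∀ Y Z : Matrix (α × β) (α × β) ℂ, ptraceB (Y + Z) = ptraceB Y + ptraceB Z :=
    fun Y Z => map_add ptLin Y Z
  have hsum : ∀ f : Fin m → Matrix (α × β) (α × β) ℂ,
      ptraceB (∑ k, f k) = ∑ k, ptraceB (f k) := fun f => map_sum ptLin f _
  simp only [effGen_apply, kstar, Matrix.mul_add, Finset.mul_sum, hadd, hsum]
  simp only [Matrix.mul_assoc, hcomm, ptraceB_left]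
  simp only [← Matrix.mul_assoc, ptraceB_right]

theorem support_kill (ρ : Matrix (α × β) (α × β) ℂ) (hρ : ρ.PosSemidef) (Q : Matrix α α ℂ)
    (hQ : Qᴴ = Q) (h : Q * ptraceB ρ = 0) :
    ρ * Matrix.kroneckerMap (· * ·) Q (1 : Matrix β β ℂ) = 0 ∧
      Matrix.kroneckerMap (· * ·) Q (1 : Matrix β β ℂ) * ρ = 0 := by
  set K := Matrix.kroneckerMap (· * ·) Q (1 : Matrix β β ℂ) with hK
  have hKs : Kᴴ = K := by rw [hK, kstar, hQ]
  have h1 : ρ * K = 0 := by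
    obtain ⟨R, hR⟩ : ∃ R : Matrix (α × β) (α × β) ℂ, ρ = Rᴴ * R := by
      open scoped MatrixOrder in
      obtain ⟨R, hR⟩ := CStarAlgebra.nonneg_iff_eq_star_mul_self.1
        (Matrix.nonneg_iff_posSemidef.2 hρ)
      exact ⟨R, hR⟩
    have ht : ((R * K)ᴴ * (R * K)).trace = 0 := by
      have : (R * K)ᴴ * (R * K) = K * ρ * K := by
        rw [conjTranspose_mul, hKs, hR]; simp only [Matrix.mul_assoc]
      rw [this, ← ptraceB_trace, ptraceB_right, ptraceB_left, h, Matrix.zero_mul, trace_zero]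
    rw [trace_conjTranspose_mul_self_eq_zero_iff] at ht
    rw [hR, Matrix.mul_assoc, ht, Matrix.mul_zero]
  refine ⟨h1, ?_⟩
  have := congrArg conjTranspose h1
  rwa [conjTranspose_mul, hKs, hρ.1.eq, conjTranspose_zero] at this

end Bip

end Aux

/-! ### Statement 6 -/

theorem stmt6
    {α β : Type*} [Fintype α] [Fintype β] [DecidableEq α] [DecidableEq β]
    (HN : Matrix α α ℂ) (hHN : HN.IsHermitian) {m : ℕ} (Lk : Fin m → Matrix α α ℂ)
    (ρ : Matrix (α × β) (α × β) ℂ) (hρ : IsDensity ρ)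
    (hρfix : lindbladMap (Matrix.kroneckerMap (· * ·) HN (1 : Matrix β β ℂ))
      (fun k => Matrix.kroneckerMap (· * ·) (Lk k) (1 : Matrix β β ℂ)) ρ = 0) :
    Submodule.span ℂ {X : Matrix (α × β) (α × β) ℂ |
        ∃ A ∈ Fdist (ptraceB ρ) (opSchmidtA ρ), ∃ B : Matrix β β ℂ,
          X = Matrix.kroneckerMap (· * ·) A B} ≤
      LinearMap.ker (lindbladMap (Matrix.kroneckerMap (· * ·) HN (1 : Matrix β β ℂ))
        fun k => Matrix.kroneckerMap (· * ·) (Lk k) (1 : Matrix β β ℂ)) := by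
  rw [Submodule.span_le]
  rintro _ ⟨A, hA, B, rfl⟩
  have hK := kron_isHermitian (β := β) HN hHN
  rw [lindblad_eq _ hK, effG_kron] at hρfix
  show lindbladMap _ _ _ = 0
  rw [lindblad_eq _ hK, effG_kron, effGen_kron]
  have hW : ∀ X ∈ opSchmidtA ρ, effGen (effG HN Lk) Lk X = 0 := by
    rintro _ ⟨B, rfl⟩
    rw [effGen_ptrace, hρfix, Matrix.mul_zero]
    exact map_zero ptLin
  have hmem : ptraceB ρ ∈ opSchmidtA ρ := by
    refine ⟨1, ?_⟩
    rw [ptraceB_left, Matrix.one_mul]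
  have hsupp : ∀ Q : Matrix α α ℂ, Qᴴ = Q → Q * ptraceB ρ = 0 →
      ∀ X ∈ opSchmidtA ρ, Q * X = 0 ∧ X * Q = 0 := by
    rintro Q hQ hQ0 _ ⟨B, rfl⟩
    obtain ⟨h1, h2⟩ := support_kill ρ hρ.1 Q hQ hQ0
    have hz : ptraceB (0 : Matrix (α × β) (α × β) ℂ) = 0 := map_zero ptLin
    constructor
    · rw [← ptraceB_left, ← Matrix.mul_assoc, kmul, Matrix.mul_one, Matrix.one_mul,
        ← Matrix.one_mul Q, ← Matrix.mul_one B, ← kmul, Matrix.mul_assoc, h2, Matrix.mul_zero, hz]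
    · rw [← ptraceB_right, Matrix.mul_assoc, h1, Matrix.mul_zero, hz]
  rw [core (effG HN Lk) Lk (effG_cond HN hHN Lk) (ptraceB ρ) (ptraceB_posSemidef ρ hρ.1)
    (hW _ hmem) (opSchmidtA ρ) hW hsupp A hA]
  exact map_zero (kronLin B)

end QDS
end
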